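/- There exists ε ∈ (0,1) such that for every even n ≥ 2 and every pair of families (f_x)_{x∈L^n_n} and (g_x)_{x∈L^n_n} of outcomes on the maximal isotropic subspaces of (ZMod 2)^{2n}, the fraction of ordered pairs (x,y) ∈ L^n_n × L^n_n with dim(x ∩ y) = n/2 for which the outcomes f_x and g_y are consistent is at most ε^n. (Equivalently, the local value of the game Z_{n/2} satisfies Val_loc(Z_{n/2}) < ε^n.) -/

import Mathlib

open Finset

abbrev F2 := ZMod 2
/-- `F2^{2n}`, split into the first and last `n` coordinates. -/
abbrev PV (n : ℕ) := (Fin n → F2) × (Fin n → F2)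

/-- Symplectic product on `F2^{2n}`: zero iff `a₁·b₂ = a₂·b₁`. -/
def symp {n : ℕ} (a b : PV n) : F2 :=
  (∑ i, a.1 i * b.2 i) + (∑ i, a.2 i * b.1 i)

/-- A subspace is isotropic if the symplectic product vanishes on it. -/
def IsIsotropic {n : ℕ} (S : Submodule F2 (PV n)) : Prop :=
  ∀ x ∈ S, ∀ y ∈ S, symp x y = 0

/-- `Lset n k` = `L^n_k`, the set of `k`-dimensional isotropic subspaces of `F2^{2n}`. -/
def Lset (n k : ℕ) : Set (Submodule F2 (PV n)) :=
  {S | IsIsotropic S ∧ Module.finrank F2 S = k}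

/-- Integer lift of a vector over `F2`, with values in `{0,1} ⊆ ℤ`. -/
def liftZ {n : ℕ} (v : Fin n → F2) : Fin n → ℤ := fun i => ((v i).val : ℤ)

def dotZ {n : ℕ} (a b : Fin n → ℤ) : ℤ := ∑ i, a i * b i

/-- The phase `i^{x̂₁·x̂₂} · i^{ŷ₁·ŷ₂} · i^{−((x+y)^^₁·(x+y)^^₂)} · (−1)^{x̂₂·ŷ₁}`. -/
noncomputable def phase {n : ℕ} (x y : PV n) : ℂ :=
  Complex.I ^ (dotZ (liftZ x.1) (liftZ x.2)) *
  Complex.I ^ (dotZ (liftZ y.1) (liftZ y.2)) *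
  Complex.I ^ (-(dotZ (liftZ (x + y).1) (liftZ (x + y).2))) *
  (-1 : ℂ) ^ (dotZ (liftZ x.2) (liftZ y.1))

/-- `w(x,y) ∈ {0,1} ⊆ F2`: zero iff the phase equals `1`. -/
noncomputable def wght {n : ℕ} (x y : PV n) : F2 :=
  if phase x y = 1 then 0 else 1

/-- An outcome of an isotropic subspace `S` is `f : S → F2` with
`f(x+y) = f(x)+f(y)+w(x,y)`. -/
def IsOutcome {n : ℕ} (S : Submodule F2 (PV n)) (f : S → F2) : Prop :=
  ∀ x y : S, f (x + y) = f x + f y + wght (x : PV n) (y : PV n)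

/-- Two outcomes are consistent if they agree on the intersection of their domains. -/
def ConsistentOn {n : ℕ} {S₁ S₂ : Submodule F2 (PV n)} (f₁ : S₁ → F2) (f₂ : S₂ → F2) : Prop :=
  ∀ v (h1 : v ∈ S₁) (h2 : v ∈ S₂), f₁ ⟨v, h1⟩ = f₂ ⟨v, h2⟩

section LV
open Classical

noncomputable instance instFintypeSubPV (n : ℕ) : Fintype (Submodule F2 (PV n)) :=
  Fintype.ofFinite _

theorem symp_add_left {n : ℕ} (a b c : PV n) : symp (a + b) c = symp a c + symp b c := by
  simp only [symp, Prod.fst_add, Prod.snd_add, Pi.add_apply, add_mul, Finset.sum_add_distrib]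
  ring

theorem symp_add_right {n : ℕ} (a b c : PV n) : symp a (b + c) = symp a b + symp a c := by
  simp only [symp, Prod.fst_add, Prod.snd_add, Pi.add_apply, mul_add, Finset.sum_add_distrib]
  ring

theorem symp_smul_left {n : ℕ} (t : F2) (a c : PV n) : symp (t • a) c = t * symp a c := by
  simp only [symp, Prod.smul_fst, Prod.smul_snd, Pi.smul_apply, smul_eq_mul, mul_add,
    Finset.mul_sum, mul_assoc]

theorem symp_comm {n : ℕ} (a b : PV n) : symp a b = symp b a := by
  simp only [symp]
  rw [add_comm]
  congr 1 <;> exact Finset.sum_congr rfl fun i _ => mul_comm _ _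

theorem symp_smul_right {n : ℕ} (t : F2) (a c : PV n) : symp a (t • c) = t * symp a c := by
  rw [symp_comm, symp_smul_left, symp_comm]

theorem F2_add_self (t : F2) : t + t = 0 := by
  revert t; decide

theorem PV_add_self {n : ℕ} (a : PV n) : a + a = 0 := by
  ext i <;> simp [F2_add_self]

theorem symp_self {n : ℕ} (a : PV n) : symp a a = 0 := by
  simp only [symp]
  have : ∑ i, a.2 i * a.1 i = ∑ i, a.1 i * a.2 i :=
    Finset.sum_congr rfl fun i _ => mul_comm _ _
  rw [this, F2_add_self]

noncomputable def sympB (n : ℕ) : LinearMap.BilinForm F2 (PV n) :=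
  LinearMap.mk₂ F2 symp symp_add_left symp_smul_left symp_add_right symp_smul_right

theorem sympB_apply {n : ℕ} (a b : PV n) : sympB n a b = symp a b := rfl

theorem symp_nondeg {n : ℕ} (a : PV n) (h : ∀ b, symp a b = 0) : a = 0 := by
  ext i
  · have := h (0, Pi.single i 1)
    simpa [symp, Pi.single_apply] using this
  · have := h (Pi.single i 1, 0)
    simpa [symp, Pi.single_apply] using this

theorem sympB_ker (n : ℕ) : LinearMap.ker (sympB n) = ⊥ := by
  rw [LinearMap.ker_eq_bot']
  intro a ha
  apply symp_nondeg
  intro b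
  rw [← sympB_apply, ha]; rfl

noncomputable def perp {n : ℕ} (u : Submodule F2 (PV n)) : Submodule F2 (PV n) :=
  (sympB n).orthogonal u

theorem mem_perp {n : ℕ} {u : Submodule F2 (PV n)} {w : PV n} :
    w ∈ perp u ↔ ∀ x ∈ u, symp x w = 0 := Iff.rfl

theorem finrank_PV (n : ℕ) : Module.finrank F2 (PV n) = 2 * n := by
  simp [two_mul]

theorem finrank_perp {n : ℕ} (u : Submodule F2 (PV n)) :
    Module.finrank F2 u + Module.finrank F2 (perp u) = 2 * n := by
  have := LinearMap.BilinForm.finrank_add_finrank_orthogonal' (B := sympB n) u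
  rw [sympB_ker, inf_bot_eq, finrank_bot, add_zero, finrank_PV] at this
  exact this

theorem card_sub {n : ℕ} (u : Submodule F2 (PV n)) :
    ((univ.filter (fun w => w ∈ u)).card : ℝ) = 2 ^ (Module.finrank F2 u) := by
  have h := Module.card_eq_pow_finrank (K := F2) (V := u)
  rw [ZMod.card, Fintype.card_subtype] at h
  exact_mod_cast h

/-- The elements of `z` outside `u`. -/
noncomputable def outs {n : ℕ} (u z : Submodule F2 (PV n)) : Finset (PV n) :=
  univ.filter (fun w => w ∈ z ∧ w ∉ u)

/-- The isotropic subspaces of dimension `k` above `u`. -/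
noncomputable def above {n : ℕ} (k : ℕ) (u : Submodule F2 (PV n)) :
    Finset (Submodule F2 (PV n)) :=
  univ.filter (fun z => z ∈ Lset n k ∧ u ≤ z)

theorem mem_outs {n : ℕ} {u z : Submodule F2 (PV n)} {w : PV n} :
    w ∈ outs u z ↔ w ∈ z ∧ w ∉ u := by simp [outs]

theorem mem_above {n k : ℕ} {u z : Submodule F2 (PV n)} :
    z ∈ above k u ↔ z ∈ Lset n k ∧ u ≤ z := by simp [above]

theorem card_outs {n : ℕ} {u z : Submodule F2 (PV n)} (h : u ≤ z) :
    ((outs u z).card : ℝ) = 2 ^ (Module.finrank F2 z) - 2 ^ (Module.finrank F2 u) := by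
  rw [← card_sub z, ← card_sub u]
  have h1 : outs u z = (univ.filter (fun w => w ∈ z)) \ (univ.filter (fun w => w ∈ u)) := by
    ext w; simp [outs]
  have h2 : (univ.filter (fun w => w ∈ u)) ⊆ (univ.filter (fun w => w ∈ z)) := by
    intro w; simp only [mem_filter, mem_univ, true_and]; exact fun hw => h hw
  rw [h1, card_sdiff_of_subset h2, Nat.cast_sub (card_le_card h2)]

theorem iso_le_perp {n : ℕ} {u : Submodule F2 (PV n)} (h : IsIsotropic u) : u ≤ perp u :=
  fun w hw => mem_perp.2 fun x hx => h x hx w hw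

theorem finrank_le_of_iso {n : ℕ} {u : Submodule F2 (PV n)} (h : IsIsotropic u) :
    Module.finrank F2 u ≤ n := by
  have h1 := Submodule.finrank_mono (iso_le_perp h)
  have h2 := finrank_perp u
  omega

theorem span_le' {n : ℕ} {u : Submodule F2 (PV n)} {w : PV n} :
    Submodule.span F2 {w} ≤ u ↔ w ∈ u := by
  rw [Submodule.span_le, Set.singleton_subset_iff, SetLike.mem_coe]

theorem mem_span1 {n : ℕ} {v w : PV n} : v ∈ Submodule.span F2 {w} ↔ v = 0 ∨ v = w := by
  rw [Submodule.mem_span_singleton]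
  constructor
  · rintro ⟨a, rfl⟩
    have : a = 0 ∨ a = 1 := by revert a; decide
    rcases this with rfl | rfl <;> simp
  · rintro (rfl | rfl)
    · exact ⟨0, by simp⟩
    · exact ⟨1, by simp⟩

theorem mem_sup_span {n : ℕ} {u : Submodule F2 (PV n)} {v w : PV n} :
    v ∈ u ⊔ Submodule.span F2 {w} ↔ v ∈ u ∨ v + w ∈ u := by
  rw [Submodule.mem_sup]
  constructor
  · rintro ⟨y, hy, z, hz, rfl⟩
    rcases mem_span1.1 hz with rfl | rfl
    · left; simpa using hy
    · right; rw [add_assoc, PV_add_self, add_zero]; exact hy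
  · rintro (h | h)
    · exact ⟨v, h, 0, by simp, by simp⟩
    · exact ⟨v + w, h, w, mem_span1.2 (Or.inr rfl), by rw [add_assoc, PV_add_self, add_zero]⟩

theorem iso_sup_span {n : ℕ} {u : Submodule F2 (PV n)} {w : PV n} (h : IsIsotropic u)
    (hw : w ∈ perp u) : IsIsotropic (u ⊔ Submodule.span F2 {w}) := by
  have key : ∀ x ∈ u ⊔ Submodule.span F2 {w}, ∃ y ∈ u, x = y ∨ x = y + w := by
    intro x hx
    rcases mem_sup_span.1 hx with h | h
    · exact ⟨x, h, Or.inl rfl⟩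
    · exact ⟨x + w, h, Or.inr (by rw [add_assoc, PV_add_self, add_zero])⟩
  intro x hx y hy
  obtain ⟨a, ha, hxa⟩ := key x hx
  obtain ⟨b, hb, hyb⟩ := key y hy
  have h1 := h a ha b hb
  have h2 := mem_perp.1 hw a ha
  have h3 : symp w b = 0 := by rw [symp_comm]; exact mem_perp.1 hw b hb
  have h4 := symp_self w
  rcases hxa with rfl | rfl <;> rcases hyb with rfl | rfl <;>
    simp [symp_add_left, symp_add_right, h1, h2, h3, h4]

theorem finrank_sup_span {n : ℕ} {u : Submodule F2 (PV n)} {w : PV n} (hw : w ∉ u) :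
    Module.finrank F2 ↥(u ⊔ Submodule.span F2 {w}) = Module.finrank F2 u + 1 := by
  have h1 := Submodule.finrank_sup_add_finrank_inf_eq u (Submodule.span F2 {w})
  have h0 : w ≠ 0 := fun h => hw (h ▸ u.zero_mem)
  have h2 : u ⊓ Submodule.span F2 {w} = ⊥ := by
    rw [eq_bot_iff]
    rintro v ⟨hv1, hv2⟩
    rcases mem_span1.1 hv2 with rfl | rfl
    · simp
    · exact absurd hv1 hw
  rw [h2, finrank_bot, finrank_span_singleton h0] at h1
  omega

theorem sum_swap {n k : ℕ} (u : Submodule F2 (PV n)) (φ : Submodule F2 (PV n) → PV n → ℝ) :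
    ∑ w ∈ outs u (perp u), ∑ z ∈ above k (u ⊔ Submodule.span F2 {w}), φ z w =
      ∑ z ∈ above k u, ∑ w ∈ outs u z, φ z w := by
  apply Finset.sum_comm'
  intro w z
  simp only [mem_outs, mem_above, sup_le_iff, span_le']
  constructor
  · rintro ⟨⟨h1, h2⟩, h3, h4, h5⟩
    exact ⟨⟨h5, h2⟩, h3, h4⟩
  · rintro ⟨⟨h1, h2⟩, h3, h4⟩
    exact ⟨⟨mem_perp.2 fun x hx => h3.1 x (h4 hx) w h1, h2⟩, h3, h4, h1⟩

theorem sum_inc {n k : ℕ} (u : Submodule F2 (PV n)) (φ : Submodule F2 (PV n) → ℝ) :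
    ∑ w ∈ outs u (perp u), ∑ z ∈ above k (u ⊔ Submodule.span F2 {w}), φ z =
      (2 ^ k - 2 ^ (Module.finrank F2 u)) * ∑ z ∈ above k u, φ z := by
  rw [sum_swap u (fun z _ => φ z), Finset.mul_sum]
  apply Finset.sum_congr rfl
  intro z hz
  obtain ⟨h1, h2⟩ := mem_above.1 hz
  rw [Finset.sum_const, nsmul_eq_mul, card_outs h2, h1.2]

/-- Number of isotropic `k`-spaces above an isotropic `j`-space. -/
noncomputable def Kc (n k j : ℕ) : ℝ :=
  ∏ i ∈ Finset.Ico j k, ((2 ^ (2 * n - i) - 2 ^ i) / (2 ^ k - 2 ^ i) : ℝ)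

theorem Kc_self (n k : ℕ) : Kc n k k = 1 := by simp [Kc]

theorem Kc_step {n k j : ℕ} (h : j < k) :
    ((2:ℝ) ^ k - 2 ^ j) * Kc n k j = (2 ^ (2 * n - j) - 2 ^ j) * Kc n k (j + 1) := by
  rw [Kc, Finset.prod_eq_prod_Ico_succ_bot h, Kc]
  have : (2:ℝ) ^ j < 2 ^ k := pow_lt_pow_right₀ (by norm_num) h
  have : (2:ℝ) ^ k - 2 ^ j ≠ 0 := by linarith
  field_simp

theorem Kc_pos {n k j : ℕ} (hk : k ≤ n) : 0 < Kc n k j := by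
  apply Finset.prod_pos
  intro i hi
  have hi := Finset.mem_Ico.1 hi
  have h1 : (2:ℝ) ^ i < 2 ^ k := pow_lt_pow_right₀ (by norm_num) hi.2
  have h2 : (2:ℝ) ^ i < 2 ^ (2 * n - i) := pow_lt_pow_right₀ (by norm_num) (by omega)
  apply div_pos <;> linarith

theorem above_self {n k : ℕ} {u : Submodule F2 (PV n)} (hu : IsIsotropic u)
    (hj : Module.finrank F2 u = k) : above k u = {u} := by
  ext z
  rw [mem_above, Finset.mem_singleton]
  constructor
  · rintro ⟨h1, h2⟩
    exact (Submodule.eq_of_le_of_finrank_eq h2 (by rw [hj, h1.2])).symm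
  · rintro rfl
    exact ⟨⟨hu, hj⟩, le_rfl⟩

theorem card_outs_perp {n : ℕ} {u : Submodule F2 (PV n)} (hu : IsIsotropic u) :
    ((outs u (perp u)).card : ℝ) =
      2 ^ (2 * n - Module.finrank F2 u) - 2 ^ (Module.finrank F2 u) := by
  rw [card_outs (iso_le_perp hu)]
  have := finrank_perp u
  congr 2
  omega

theorem card_above {n k : ℕ} (hk : k ≤ n) (d : ℕ) : ∀ (u : Submodule F2 (PV n)),
    IsIsotropic u → Module.finrank F2 u + d = k →
    ((above k u).card : ℝ) = Kc n k (Module.finrank F2 u) := by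
  induction d with
  | zero =>
    intro u hu h
    rw [above_self hu (by omega)]
    have : Module.finrank F2 u = k := by omega
    rw [this, Kc_self]; simp
  | succ d ih =>
    intro u hu h
    have h1 := sum_inc (k := k) u (fun _ => 1)
    have h2 : ∀ w ∈ outs u (perp u), ∑ z ∈ above k (u ⊔ Submodule.span F2 {w}), (1:ℝ) =
        Kc n k (Module.finrank F2 u + 1) := by
      intro w hw
      obtain ⟨hw1, hw2⟩ := mem_outs.1 hw
      have h3 := finrank_sup_span hw2
      have := ih _ (iso_sup_span hu hw1) (by omega)
      rw [h3] at this
      simpa using this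
    rw [Finset.sum_congr rfl h2, Finset.sum_const, nsmul_eq_mul, card_outs_perp hu,
      ← Kc_step (by omega)] at h1
    have : (2:ℝ) ^ (Module.finrank F2 u) < 2 ^ k := pow_lt_pow_right₀ (by norm_num) (by omega)
    have h4 := mul_left_cancel₀ (by linarith : (2:ℝ) ^ k - 2 ^ (Module.finrank F2 u) ≠ 0) h1
    simpa using h4.symm

/-- Number of Lagrangians above an isotropic `j`-space. -/
noncomputable abbrev Nc (n j : ℕ) : ℝ := Kc n n j

theorem Nc_step {n j : ℕ} (h : j < n) : Nc n j = (2 ^ (n - j) + 1) * Nc n (j + 1) := by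
  have h1 := Kc_step (n := n) h
  obtain ⟨m, rfl⟩ : ∃ m, n = j + m := ⟨n - j, by omega⟩
  have e : 2 * (j + m) - j = j + m + m := by omega
  have e2 : j + m - j = m := by omega
  rw [e] at h1
  rw [e2]
  have : (2:ℝ) ^ j < 2 ^ (j + m) := pow_lt_pow_right₀ (by norm_num) h
  apply mul_left_cancel₀ (by linarith : (2:ℝ) ^ (j + m) - 2 ^ j ≠ 0)
  rw [h1]
  ring

end LV

section LV
open Classical

/-- sign of an element of `F2`. -/
noncomputable def sg (t : F2) : ℝ := if t = 0 then 1 else -1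

theorem sg_add (s t : F2) : sg (s + t) = sg s * sg t := by
  have hs : s = 0 ∨ s = 1 := by revert s; decide
  have ht : t = 0 ∨ t = 1 := by revert t; decide
  have h11 : (1 : F2) + 1 = 0 := by decide
  rcases hs with rfl | rfl <;> rcases ht with rfl | rfl <;> simp [sg, h11]

theorem sg_zero : sg 0 = 1 := by simp [sg]

theorem sg_ne {t : F2} (h : t ≠ 0) : sg t = -1 := by simp [sg, h]

theorem sg_abs (t : F2) : |sg t| = 1 := by
  unfold sg; split_ifs <;> simp

theorem sg_mul_self (t : F2) : sg t * sg t = 1 := by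
  unfold sg; split_ifs <;> simp

theorem card_PV (n : ℕ) : (Fintype.card (PV n) : ℝ) = 4 ^ n := by
  simp only [Fintype.card_prod, Fintype.card_fun, ZMod.card, Fintype.card_fin]
  push_cast
  rw [← mul_pow]; norm_num

theorem sum_chi {n : ℕ} (a : PV n) :
    ∑ w : PV n, sg (symp a w) = if a = 0 then (4:ℝ) ^ n else 0 := by
  split_ifs with h
  · subst h
    have : ∀ w : PV n, symp 0 w = 0 := by intro w; simp [symp]
    simp only [this, sg_zero, sum_const, card_univ, nsmul_eq_mul, card_PV, mul_one]
  · have : ∃ b, symp a b ≠ 0 := by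
      by_contra hc
      push Not at hc
      exact h (symp_nondeg a hc)
    obtain ⟨b, hb⟩ := this
    have h1 : ∑ w : PV n, sg (symp a (w + b)) = ∑ w : PV n, sg (symp a w) :=
      Equiv.sum_comp (Equiv.addRight b) (fun w => sg (symp a w))
    simp only [symp_add_right, sg_add, sg_ne hb, mul_neg, mul_one, sum_neg_distrib] at h1
    linarith

theorem PV_add_eq_zero {n : ℕ} {a b : PV n} : a + b = 0 ↔ a = b := by
  constructor
  · intro h
    have : a + b + b = b := by rw [h, zero_add]
    rw [add_assoc, PV_add_self, add_zero] at this
    exact this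
  · rintro rfl; exact PV_add_self a

theorem chi_parseval {n : ℕ} (ψ : PV n → ℝ) :
    ∑ w', (∑ w, sg (symp w w') * ψ w) ^ 2 = 4 ^ n * ∑ w, ψ w ^ 2 := by
  have : ∀ w' : PV n, (∑ w, sg (symp w w') * ψ w) ^ 2 =
      ∑ a, ∑ b, ψ a * ψ b * sg (symp (a + b) w') := by
    intro w'
    rw [sq, Finset.sum_mul_sum]
    refine Finset.sum_congr rfl fun a _ => Finset.sum_congr rfl fun b _ => ?_
    rw [symp_add_left, sg_add]; ring
  simp only [this]
  rw [Finset.sum_comm, Finset.mul_sum]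
  refine Finset.sum_congr rfl fun a _ => ?_
  rw [Finset.sum_comm]
  simp only [← Finset.mul_sum, sum_chi, PV_add_eq_zero]
  simp
  ring

theorem chi_bound {n : ℕ} (ψ : PV n → ℝ) :
    ∑ w, ∑ w', sg (symp w w') * (ψ w * ψ w') ≤ 2 ^ n * ∑ w, ψ w ^ 2 := by
  have h0 : 0 ≤ ∑ w, ψ w ^ 2 := Finset.sum_nonneg fun _ _ => sq_nonneg _
  have h1 : ∑ w, ∑ w', sg (symp w w') * (ψ w * ψ w') =
      ∑ w', ψ w' * ∑ w, sg (symp w w') * ψ w := by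
    rw [Finset.sum_comm]
    refine Finset.sum_congr rfl fun a _ => ?_
    rw [Finset.mul_sum]
    exact Finset.sum_congr rfl fun b _ => by ring
  rw [h1]
  refine le_of_abs_le (abs_le_of_sq_le_sq ?_ (by positivity))
  refine (Finset.sum_mul_sq_le_sq_mul_sq _ _ _).trans ?_
  rw [chi_parseval]
  apply le_of_eq
  have : (4:ℝ) ^ n = 2 ^ n * 2 ^ n := by rw [← mul_pow]; norm_num
  rw [this]; ring

theorem comm_sum {n : ℕ} (ψ : PV n → ℝ) (h : ∑ w, ψ w = 0) :
    ∑ w, ψ w * ∑ w' with symp w w' = 0, ψ w' ≤ 2 ^ n / 2 * ∑ w, ψ w ^ 2 := by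
  have h1 : ∀ w : PV n, ∑ w' with symp w w' = 0, ψ w' =
      (1/2) * ∑ w', sg (symp w w') * ψ w' := by
    intro w
    rw [Finset.sum_filter]
    have : ∀ w' : PV n, (if symp w w' = 0 then ψ w' else 0) =
      (1/2) * ψ w' + (1/2) * (sg (symp w w') * ψ w') := by
      intro w'
      unfold sg
      split_ifs <;> ring
    simp only [this, Finset.sum_add_distrib, ← Finset.mul_sum, h]
    ring
  have h2 := chi_bound ψ
  calc ∑ w, ψ w * ∑ w' with symp w w' = 0, ψ w'
      = (1/2) * ∑ w, ∑ w', sg (symp w w') * (ψ w * ψ w') := by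
        rw [Finset.mul_sum]
        refine Finset.sum_congr rfl fun w _ => ?_
        rw [h1, Finset.mul_sum, Finset.mul_sum, Finset.mul_sum]
        exact Finset.sum_congr rfl fun b _ => by ring
    _ ≤ _ := by linarith

/-- average of `F` over Lagrangians above `u`. -/
noncomputable def bavg {n : ℕ} (F : Submodule F2 (PV n) → ℝ) (u : Submodule F2 (PV n)) : ℝ :=
  (∑ x ∈ above n u, F x) / Nc n (Module.finrank F2 u)

theorem card_aboveN {n : ℕ} {u : Submodule F2 (PV n)} (hu : IsIsotropic u) :
    ((above n u).card : ℝ) = Nc n (Module.finrank F2 u) := by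
  have := finrank_le_of_iso hu
  exact card_above le_rfl (n - Module.finrank F2 u) u hu (by omega)

theorem sum_bavg {n : ℕ} (F : Submodule F2 (PV n) → ℝ) (u : Submodule F2 (PV n)) :
    ∑ x ∈ above n u, F x = Nc n (Module.finrank F2 u) * bavg F u := by
  have := Kc_pos (n := n) (j := Module.finrank F2 u) (le_refl n)
  rw [bavg, mul_div_cancel₀ _ this.ne']

theorem bavg_abs {n : ℕ} (F : Submodule F2 (PV n) → ℝ) (hF : ∀ x, |F x| ≤ 1)
    {u : Submodule F2 (PV n)} (hu : IsIsotropic u) : |bavg F u| ≤ 1 := by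
  have h := Kc_pos (n := n) (j := Module.finrank F2 u) (le_refl n)
  rw [bavg, abs_div, abs_of_pos h, div_le_one h]
  refine (Finset.abs_sum_le_sum_abs _ _).trans ?_
  refine (Finset.sum_le_sum fun x _ => hF x).trans ?_
  rw [Finset.sum_const, nsmul_eq_mul, mul_one, card_aboveN hu]

theorem sum_bavg_up {n : ℕ} (F : Submodule F2 (PV n) → ℝ) {u : Submodule F2 (PV n)}
    (hu : IsIsotropic u) (hj : Module.finrank F2 u < n) :
    ∑ w ∈ outs u (perp u), bavg F (u ⊔ Submodule.span F2 {w}) =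
      (outs u (perp u)).card * bavg F u := by
  have h1 := sum_inc (k := n) u F
  have h2 : ∀ w ∈ outs u (perp u), ∑ z ∈ above n (u ⊔ Submodule.span F2 {w}), F z =
      Nc n (Module.finrank F2 u + 1) * bavg F (u ⊔ Submodule.span F2 {w}) := by
    intro w hw
    rw [sum_bavg, finrank_sup_span (mem_outs.1 hw).2]
  rw [Finset.sum_congr rfl h2, ← Finset.mul_sum, sum_bavg, ← mul_assoc, Kc_step hj] at h1
  rw [card_outs_perp hu]
  have := Kc_pos (n := n) (j := Module.finrank F2 u + 1) (le_refl n)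
  apply mul_left_cancel₀ this.ne'
  rw [h1]; ring

theorem sup_span_eq {n : ℕ} {u : Submodule F2 (PV n)} {v w : PV n}
    (h : v ∈ outs u (u ⊔ Submodule.span F2 {w})) :
    u ⊔ Submodule.span F2 {v} = u ⊔ Submodule.span F2 {w} := by
  obtain ⟨h1, h2⟩ := mem_outs.1 h
  have h3 : v + w ∈ u := (mem_sup_span.1 h1).resolve_left h2
  apply le_antisymm
  · exact sup_le le_sup_left (span_le'.2 h1)
  · refine sup_le le_sup_left (span_le'.2 (mem_sup_span.2 (Or.inr ?_)))
    rw [add_comm]; exact h3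

/-- the deviation of the averages one level up. -/
noncomputable def dev {n : ℕ} (F : Submodule F2 (PV n) → ℝ) (u : Submodule F2 (PV n))
    (w : PV n) : ℝ :=
  if w ∈ outs u (perp u) then bavg F (u ⊔ Submodule.span F2 {w}) - bavg F u else 0

theorem dev_inner {n : ℕ} (F : Submodule F2 (PV n) → ℝ) {u : Submodule F2 (PV n)}
    (hu : IsIsotropic u) {w : PV n} (hw : w ∈ outs u (perp u)) :
    ∑ x ∈ above n (u ⊔ Submodule.span F2 {w}), ∑ w' ∈ outs u x, dev F u w' =
      Nc n (Module.finrank F2 u + 1) * (2 ^ (Module.finrank F2 u) * dev F u w) +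
      Nc n (Module.finrank F2 u + 2) * ((∑ w' with symp w w' = 0, dev F u w')
        - 2 ^ (Module.finrank F2 u) * dev F u w) := by
  obtain ⟨hw1, hw2⟩ := mem_outs.1 hw
  have hiso := iso_sup_span hu hw1
  have hfr := finrank_sup_span hw2
  have A : ∑ w' ∈ outs u (u ⊔ Submodule.span F2 {w}), dev F u w' =
      2 ^ (Module.finrank F2 u) * dev F u w := by
    have : ∀ w' ∈ outs u (u ⊔ Submodule.span F2 {w}), dev F u w' = dev F u w := by
      intro w' hw'
      have h1 := sup_span_eq hw'
      obtain ⟨h2, h3⟩ := mem_outs.1 hw'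
      have h4 : w' ∈ outs u (perp u) :=
        mem_outs.2 ⟨sup_le (iso_le_perp hu) (span_le'.2 hw1) h2, h3⟩
      simp only [dev, if_pos h4, if_pos hw, h1]
    rw [Finset.sum_congr rfl this, Finset.sum_const, nsmul_eq_mul, card_outs le_sup_left, hfr]
    ring
  have split : ∀ x, u ⊔ Submodule.span F2 {w} ≤ x → ∑ w' ∈ outs u x, dev F u w' =
      (∑ w' ∈ outs (u ⊔ Submodule.span F2 {w}) x, dev F u w') +
        2 ^ (Module.finrank F2 u) * dev F u w := by
    intro x hx
    rw [← A, ← Finset.sum_union]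
    · apply Finset.sum_congr _ fun _ _ => rfl
      ext v
      simp only [mem_union, mem_outs]
      have h1 : v ∈ u → v ∈ u ⊔ Submodule.span F2 {w} := fun h => le_sup_left (a := u) h
      have h2 : v ∈ u ⊔ Submodule.span F2 {w} → v ∈ x := fun h => hx h
      tauto
    · rw [Finset.disjoint_left]
      intro v
      simp only [mem_outs]
      tauto
  rw [Finset.sum_congr rfl fun x hx => split x (mem_above.1 hx).2, Finset.sum_add_distrib,
    Finset.sum_const, nsmul_eq_mul, card_aboveN hiso, hfr,
    ← sum_swap (u ⊔ Submodule.span F2 {w}) (fun _ w' => dev F u w')]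
  have h3 : ∀ w' ∈ outs (u ⊔ Submodule.span F2 {w}) (perp (u ⊔ Submodule.span F2 {w})),
      ∑ z ∈ above n (u ⊔ Submodule.span F2 {w} ⊔ Submodule.span F2 {w'}), dev F u w' =
        Nc n (Module.finrank F2 u + 2) * dev F u w' := by
    intro w' hw'
    obtain ⟨g1, g2⟩ := mem_outs.1 hw'
    rw [Finset.sum_const, nsmul_eq_mul, card_aboveN (iso_sup_span hiso g1), finrank_sup_span g2,
      hfr]
  rw [Finset.sum_congr rfl h3, ← Finset.mul_sum]
  have h4 : ∑ w' with symp w w' = 0, dev F u w' =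
      (∑ w' ∈ outs (u ⊔ Submodule.span F2 {w}) (perp (u ⊔ Submodule.span F2 {w})), dev F u w') +
        2 ^ (Module.finrank F2 u) * dev F u w := by
    rw [← split _ (iso_le_perp hiso)]
    symm
    apply Finset.sum_subset_zero_on_sdiff
    · intro v hv
      simp only [mem_filter, mem_univ, true_and]
      exact mem_perp.1 (mem_outs.1 hv).1 w (mem_sup_span.2 (Or.inr (by
        rw [PV_add_self]; exact u.zero_mem)))
    · intro v hv
      simp only [mem_sdiff, mem_filter, mem_univ, true_and] at hv
      unfold dev
      rw [if_neg]
      intro hv'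
      obtain ⟨g1, g2⟩ := mem_outs.1 hv'
      apply hv.2
      refine mem_outs.2 ⟨mem_perp.2 ?_, g2⟩
      intro x hx
      rcases mem_sup_span.1 hx with h | h
      · exact mem_perp.1 g1 x h
      · have := mem_perp.1 g1 _ h
        rw [symp_add_left, hv.1, add_zero] at this
        exact this
    · intro _ _; rfl
  rw [h4]
  ring

theorem dev_sum {n : ℕ} (F : Submodule F2 (PV n) → ℝ) {u : Submodule F2 (PV n)}
    (hu : IsIsotropic u) (hj : Module.finrank F2 u < n) : ∑ w, dev F u w = 0 := by
  unfold dev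
  rw [← Finset.sum_filter, Finset.filter_mem_eq_inter, Finset.univ_inter,
    Finset.sum_sub_distrib, sum_bavg_up F hu hj]
  simp

theorem dev_sum_outs {n : ℕ} (F : Submodule F2 (PV n) → ℝ) (u : Submodule F2 (PV n))
    (g : PV n → ℝ) : ∑ w, dev F u w * g w = ∑ w ∈ outs u (perp u), dev F u w * g w := by
  symm
  apply Finset.sum_subset_zero_on_sdiff (Finset.subset_univ _)
  · intro w hw
    rw [dev, if_neg (Finset.mem_sdiff.1 hw).2, zero_mul]
  · intro _ _; rfl

/-- Variance bound one level up. -/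
theorem dev_sq {n : ℕ} (F : Submodule F2 (PV n) → ℝ) (hF : ∀ x, |F x| ≤ 1)
    {u : Submodule F2 (PV n)} (hu : IsIsotropic u) (hj : Module.finrank F2 u + 2 ≤ n) :
    ∑ w, dev F u w ^ 2 ≤ 2 * 2 ^ n := by
  set j := Module.finrank F2 u with hjdef
  set Ψ := ∑ w, dev F u w ^ 2 with hΨ
  have hs := dev_sum F hu (by omega)
  have N1 := Kc_pos (n := n) (j := j + 1) (le_refl n)
  have N2 := Kc_pos (n := n) (j := j + 2) (le_refl n)
  have e0 := Nc_step (n := n) (j := j) (by omega)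
  have e1 := Nc_step (n := n) (j := j + 1) (by omega)
  have hΨ0 : 0 ≤ Ψ := Finset.sum_nonneg fun _ _ => sq_nonneg _
  -- first identity
  have h1 : Nc n (j + 1) * Ψ = ∑ x ∈ above n u, F x * ∑ w ∈ outs u x, dev F u w := by
    have g1 : Ψ = ∑ w ∈ outs u (perp u), dev F u w * bavg F (u ⊔ Submodule.span F2 {w}) := by
      have : Ψ = ∑ w, dev F u w * (dev F u w + bavg F u) := by
        simp only [mul_add, Finset.sum_add_distrib, ← Finset.sum_mul, hs, zero_mul, add_zero, hΨ,
          sq]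
      rw [this, dev_sum_outs]
      refine Finset.sum_congr rfl fun w hw => ?_
      congr 1
      rw [dev, if_pos hw]; ring
    rw [g1, Finset.mul_sum]
    have g2 : ∀ w ∈ outs u (perp u),
        Nc n (j + 1) * (dev F u w * bavg F (u ⊔ Submodule.span F2 {w})) =
        ∑ x ∈ above n (u ⊔ Submodule.span F2 {w}), F x * dev F u w := by
      intro w hw
      rw [← Finset.sum_mul, sum_bavg, finrank_sup_span (mem_outs.1 hw).2]
      ring
    rw [Finset.sum_congr rfl g2, sum_swap u (fun x w => F x * dev F u w)]
    exact Finset.sum_congr rfl fun x _ => by rw [Finset.mul_sum]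
  -- second moment
  have h2 : ∑ x ∈ above n u, (∑ w ∈ outs u x, dev F u w) ^ 2 =
      Nc n (j + 1) * 2 ^ j * Ψ + Nc n (j + 2) *
        ((∑ w, dev F u w * ∑ w' with symp w w' = 0, dev F u w') - 2 ^ j * Ψ) := by
    have g1 : ∀ x ∈ above n u, (∑ w ∈ outs u x, dev F u w) ^ 2 =
        ∑ w ∈ outs u x, dev F u w * ∑ w' ∈ outs u x, dev F u w' := by
      intro x _
      rw [sq, Finset.sum_mul]
    rw [Finset.sum_congr rfl g1,
      ← sum_swap u (fun x w => dev F u w * ∑ w' ∈ outs u x, dev F u w')]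
    have g2 : ∀ w ∈ outs u (perp u), ∑ x ∈ above n (u ⊔ Submodule.span F2 {w}),
        dev F u w * ∑ w' ∈ outs u x, dev F u w' =
        dev F u w * (Nc n (j + 1) * (2 ^ j * dev F u w) +
        Nc n (j + 2) * ((∑ w' with symp w w' = 0, dev F u w') - 2 ^ j * dev F u w)) := by
      intro w hw
      rw [← Finset.mul_sum, dev_inner F hu hw]
    rw [Finset.sum_congr rfl g2, ← dev_sum_outs, hΨ, Finset.mul_sum, Finset.mul_sum,
      ← Finset.sum_sub_distrib, Finset.mul_sum, ← Finset.sum_add_distrib]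
    exact Finset.sum_congr rfl fun w _ => by ring
  have h3 := comm_sum (dev F u) hs
  rw [← hΨ] at h3
  have h4 : (Nc n (j + 1) * Ψ) ^ 2 ≤
      Nc n j * ∑ x ∈ above n u, (∑ w ∈ outs u x, dev F u w) ^ 2 := by
    rw [h1]
    refine (Finset.sum_mul_sq_le_sq_mul_sq _ _ _).trans ?_
    apply mul_le_mul_of_nonneg_right _ (Finset.sum_nonneg fun _ _ => sq_nonneg _)
    rw [hjdef, ← card_aboveN hu]
    have : ∀ x ∈ above n u, F x ^ 2 ≤ 1 := fun x _ => (sq_le_one_iff_abs_le_one _).2 (hF x)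
    refine (Finset.sum_le_sum this).trans ?_
    simp
  obtain ⟨m, hm⟩ : ∃ m, n = j + m + 1 := ⟨n - j - 1, by omega⟩
  have em0 : n - j = m + 1 := by omega
  have em1 : n - (j + 1) = m := by omega
  rw [em0] at e0
  rw [em1] at e1
  have h5 : ∑ x ∈ above n u, (∑ w ∈ outs u x, dev F u w) ^ 2 ≤ Nc n (j + 2) * 2 ^ n * Ψ := by
    rw [h2]
    have : Nc n (j + 2) * ((∑ w, dev F u w * ∑ w' with symp w w' = 0, dev F u w') - 2 ^ j * Ψ) ≤
        Nc n (j + 2) * (2 ^ n / 2 * Ψ - 2 ^ j * Ψ) := by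
      apply mul_le_mul_of_nonneg_left _ N2.le
      linarith
    refine (add_le_add_right this _).trans (le_of_eq ?_)
    have e1' : Nc n (j + 1) = (2 ^ m + 1) * Nc n (j + 2) := e1
    rw [e1']
    have : (2:ℝ) ^ n = 2 ^ j * 2 ^ m * 2 := by rw [hm]; ring
    rw [this]; ring
  have h6 : (Nc n (j + 1) * Ψ) ^ 2 ≤ Nc n j * (Nc n (j + 2) * 2 ^ n * Ψ) := by
    refine h4.trans (mul_le_mul_of_nonneg_left h5 ?_)
    exact (Kc_pos (le_refl n)).le
  rcases hΨ0.eq_or_lt with h0 | h0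
  · rw [← h0]; positivity
  have e1' : Nc n (j + 1) = (2 ^ m + 1) * Nc n (j + 2) := e1
  rw [e0, e1'] at h6
  have h7 : (2 ^ m + 1) * Ψ ≤ (2 ^ (m + 1) + 1) * 2 ^ n := by
    have c : 0 < (2 ^ m + 1 : ℝ) * Nc n (j + 2) ^ 2 * Ψ := by positivity
    apply le_of_mul_le_mul_left _ c
    calc _ = ((2 ^ m + 1) * Nc n (j + 2) * Ψ) ^ 2 := by ring
      _ ≤ _ := h6
      _ = _ := by ring
  have c : 0 < (2 ^ m + 1 : ℝ) := by positivity
  apply le_of_mul_le_mul_left _ c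
  refine h7.trans ?_
  have : (0:ℝ) < 2 ^ n := by positivity
  rw [pow_succ]
  nlinarith

end LV

section LV
open Classical

theorem level_step {n : ℕ} (F : Submodule F2 (PV n) → ℝ) (hF : ∀ x, |F x| ≤ 1)
    {u : Submodule F2 (PV n)} (hu : IsIsotropic u) (hj : Module.finrank F2 u + 2 ≤ n) :
    ∑ w ∈ outs u (perp u), bavg F (u ⊔ Submodule.span F2 {w}) ^ 2 ≤
      (outs u (perp u)).card * (bavg F u ^ 2 + 4 * 2 ^ (Module.finrank F2 u) / 2 ^ n) := by
  have h1 := dev_sq F hF hu hj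
  have h2 : ∑ w, dev F u w ^ 2 = ∑ w ∈ outs u (perp u),
      (bavg F (u ⊔ Submodule.span F2 {w}) - bavg F u) ^ 2 := by
    simp only [sq]
    rw [dev_sum_outs]
    exact Finset.sum_congr rfl fun w hw => by rw [dev, if_pos hw]
  have h3 : ∑ w ∈ outs u (perp u), (bavg F (u ⊔ Submodule.span F2 {w}) - bavg F u) ^ 2 =
      ∑ w ∈ outs u (perp u), bavg F (u ⊔ Submodule.span F2 {w}) ^ 2 -
        (outs u (perp u)).card * bavg F u ^ 2 := by
    have := sum_bavg_up F hu (by omega)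
    simp only [sub_sq, Finset.sum_add_distrib, Finset.sum_sub_distrib, ← Finset.sum_mul,
      ← Finset.mul_sum, this, Finset.sum_const, nsmul_eq_mul]
    ring
  have h4 : (2:ℝ) * 2 ^ n ≤ (outs u (perp u)).card * (4 * 2 ^ (Module.finrank F2 u) / 2 ^ n) := by
    rw [card_outs_perp hu]
    set j := Module.finrank F2 u
    obtain ⟨m, hm⟩ : ∃ m, n = j + m + 1 := ⟨n - j - 1, by omega⟩
    have e1 : (2:ℝ) ^ (2 * n - j) = 2 ^ j * 2 ^ m * 2 ^ m * 4 := by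
      have : 2 * n - j = j + m + m + 2 := by omega
      rw [this]; ring
    have e2 : (2:ℝ) ^ n = 2 ^ j * 2 ^ m * 2 := by rw [hm]; ring
    rw [e1, e2]
    have p1 : (1:ℝ) ≤ 2 ^ j := one_le_pow₀ (by norm_num)
    have p2 : (1:ℝ) ≤ 2 ^ m := one_le_pow₀ (by norm_num)
    rw [← mul_div_assoc, le_div_iff₀ (by positivity)]
    have : (1:ℝ) ≤ 2 ^ m * 2 ^ m := by nlinarith
    have q : (0:ℝ) < 2 ^ j * 2 ^ j := by positivity
    nlinarith
  rw [mul_add]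
  linarith

theorem level_up {n k : ℕ} (hk : k + 1 ≤ n) (F : Submodule F2 (PV n) → ℝ) (hF : ∀ x, |F x| ≤ 1)
    (d : ℕ) : ∀ (u : Submodule F2 (PV n)),
    IsIsotropic u → Module.finrank F2 u + d = k →
    ∑ z ∈ above k u, bavg F z ^ 2 ≤ Kc n k (Module.finrank F2 u) *
      (bavg F u ^ 2 + 4 * (2 ^ k - 2 ^ (Module.finrank F2 u)) / 2 ^ n) := by
  induction d with
  | zero =>
    intro u hu h
    have e : Module.finrank F2 u = k := by omega
    rw [above_self hu e, e, Kc_self]; simp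
  | succ d ih =>
    intro u hu h
    have h1 := sum_inc (k := k) u (fun z => bavg F z ^ 2)
    have hlt : (2:ℝ) ^ (Module.finrank F2 u) < 2 ^ k :=
      pow_lt_pow_right₀ (by norm_num) (by omega)
    have hpos : (0:ℝ) < 2 ^ k - 2 ^ (Module.finrank F2 u) := by linarith
    apply le_of_mul_le_mul_left _ hpos
    rw [← h1]
    set K := Kc n k (Module.finrank F2 u + 1) with hK
    have hKp : 0 < K := Kc_pos (by omega)
    set c : ℝ := 4 * (2 ^ k - 2 ^ (Module.finrank F2 u + 1)) / 2 ^ n with hc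
    have h2 : ∀ w ∈ outs u (perp u), ∑ z ∈ above k (u ⊔ Submodule.span F2 {w}), bavg F z ^ 2 ≤
        K * (bavg F (u ⊔ Submodule.span F2 {w}) ^ 2 + c) := by
      intro w hw
      obtain ⟨hw1, hw2⟩ := mem_outs.1 hw
      have h3 := finrank_sup_span hw2
      have := ih _ (iso_sup_span hu hw1) (by omega)
      rw [h3] at this
      exact this
    refine (Finset.sum_le_sum h2).trans ?_
    rw [← Finset.mul_sum, Finset.sum_add_distrib, Finset.sum_const, nsmul_eq_mul]
    have h4 := level_step F hF hu (by omega)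
    have h5 : K * (∑ w ∈ outs u (perp u), bavg F (u ⊔ Submodule.span F2 {w}) ^ 2 +
        (outs u (perp u)).card * c) ≤ K * ((outs u (perp u)).card *
          (bavg F u ^ 2 + 4 * 2 ^ (Module.finrank F2 u) / 2 ^ n) + (outs u (perp u)).card * c) :=
      mul_le_mul_of_nonneg_left (by linarith) hKp.le
    refine h5.trans (le_of_eq ?_)
    rw [← mul_assoc, Kc_step (by omega), ← hK, card_outs_perp hu, hc, pow_succ]
    ring

theorem lagr_perp {n : ℕ} {x : Submodule F2 (PV n)} (hx : x ∈ Lset n n) : perp x = x := by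
  have h1 := iso_le_perp hx.1
  have h2 := finrank_perp x
  have h3 := hx.2
  exact (Submodule.eq_of_le_of_finrank_eq h1 (by omega)).symm

/-- `(W ⊔ x) ⊓ W^⊥` is again of dimension `n`. -/
theorem finrank_reduce {n : ℕ} {x W : Submodule F2 (PV n)} (hx : x ∈ Lset n n)
    (hW : IsIsotropic W) : Module.finrank F2 ↥((W ⊔ x) ⊓ perp W) = n := by
  have h1 : (W ⊔ x) ⊓ perp W = W ⊔ (x ⊓ perp W) := (sup_inf_assoc_of_le x (iso_le_perp hW))
  have h2 : x ⊓ perp W = perp (W ⊔ x) := by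
    conv_lhs => rw [← lagr_perp hx]
    ext v
    simp only [Submodule.mem_inf, mem_perp]
    constructor
    · rintro ⟨a, b⟩ y hy
      obtain ⟨p, hp, q, hq, rfl⟩ := Submodule.mem_sup.1 hy
      rw [symp_add_left, a q hq, b p hp, add_zero]
    · intro h
      exact ⟨fun y hy => h y (Submodule.mem_sup_right hy),
        fun y hy => h y (Submodule.mem_sup_left hy)⟩
  have h3 := Submodule.finrank_sup_add_finrank_inf_eq W (x ⊓ perp W)
  have h4 : W ⊓ (x ⊓ perp W) = W ⊓ x := by
    rw [← inf_assoc, inf_eq_left]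
    exact inf_le_left.trans (iso_le_perp hW)
  have h5 := Submodule.finrank_sup_add_finrank_inf_eq W x
  have h6 := finrank_perp (W ⊔ x)
  have h7 := hx.2
  rw [h1]
  rw [h4, h2] at h3
  rw [h2]
  omega

theorem sup_span_inf {n : ℕ} {x z W : Submodule F2 (PV n)} (hz : W ⊓ x = z) {w : PV n}
    (hw : w ∉ W ⊔ x) : (W ⊔ Submodule.span F2 {w}) ⊓ x = z := by
  apply le_antisymm
  · rintro v ⟨h1, h2⟩
    rcases mem_sup_span.1 h1 with h | h
    · rw [← hz]; exact ⟨h, h2⟩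
    · exfalso
      apply hw
      have : w = (v + w) + v := by
        rw [add_comm v w, add_assoc, PV_add_self, add_zero]
      rw [this]
      exact add_mem (Submodule.mem_sup_left h) (Submodule.mem_sup_right h2)
  · rw [← hz]
    exact inf_le_inf_right _ le_sup_left

/-- Number of transversal Lagrangians. -/
noncomputable def Tc (n i : ℕ) : ℝ := ∏ i' ∈ Finset.Ico i n, (2:ℝ) ^ (n - i')

theorem Tc_step {n i : ℕ} (h : i < n) : Tc n i = 2 ^ (n - i) * Tc n (i + 1) := by
  rw [Tc, Finset.prod_eq_prod_Ico_succ_bot h, Tc]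

theorem Tc_pos (n i : ℕ) : 0 < Tc n i := Finset.prod_pos fun _ _ => by positivity

theorem card_trans {n : ℕ} {x z : Submodule F2 (PV n)} (hx : x ∈ Lset n n) (d : ℕ) :
    ∀ W : Submodule F2 (PV n), IsIsotropic W → W ⊓ x = z → Module.finrank F2 W + d = n →
    (((above n W).filter (fun y => x ⊓ y = z)).card : ℝ) = Tc n (Module.finrank F2 W) := by
  induction d with
  | zero =>
    intro W hW hz h
    have e : Module.finrank F2 W = n := by omega
    rw [above_self hW e, e, Finset.filter_singleton, if_pos (by rw [inf_comm]; exact hz)]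
    simp [Tc]
  | succ d ih =>
    intro W hW hz h
    have h1 := sum_inc (k := n) W (fun y => if x ⊓ y = z then (1:ℝ) else 0)
    simp only [Finset.sum_boole] at h1
    set i := Module.finrank F2 W with hi
    have h2 : ∀ w ∈ outs W (perp W),
        (((above n (W ⊔ Submodule.span F2 {w})).filter (fun y => x ⊓ y = z)).card : ℝ) =
          if w ∈ W ⊔ x then 0 else Tc n (i + 1) := by
      intro w hw
      obtain ⟨hw1, hw2⟩ := mem_outs.1 hw
      split_ifs with hwx
      · rw [Nat.cast_eq_zero, Finset.card_eq_zero, Finset.filter_eq_empty_iff]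
        intro y hy hyz
        obtain ⟨y1, y2⟩ := mem_above.1 hy
        obtain ⟨p, hp, q, hq, hpq⟩ := Submodule.mem_sup.1 hwx
        have hwy : w ∈ y := y2 (mem_sup_span.2 (Or.inr (by rw [PV_add_self]; exact W.zero_mem)))
        have hpy : p ∈ y := y2 (Submodule.mem_sup_left hp)
        have hqe : q = w + p := by
          rw [← hpq, add_comm p q, add_assoc, PV_add_self, add_zero]
        have hqy : q ∈ y := by rw [hqe]; exact add_mem hwy hpy
        have hqz : q ∈ z := by rw [← hyz]; exact ⟨hq, hqy⟩
        rw [← hz] at hqz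
        apply hw2
        rw [← hpq]
        exact add_mem hp hqz.1
      · have h3 := finrank_sup_span hw2
        have := ih _ (iso_sup_span hW hw1) (sup_span_inf hz hwx) (by omega)
        rw [h3] at this
        exact this
    rw [Finset.sum_congr rfl h2, Finset.sum_ite, Finset.sum_const_zero, zero_add,
      Finset.sum_const, nsmul_eq_mul] at h1
    have h3 : (outs W (perp W)).filter (fun w => w ∉ W ⊔ x) =
        outs ((W ⊔ x) ⊓ perp W) (perp W) := by
      ext w
      simp only [mem_filter, mem_outs, Submodule.mem_inf]
      have : w ∈ W → w ∈ W ⊔ x := fun h => Submodule.mem_sup_left h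
      tauto
    rw [h3, card_outs inf_le_right, finrank_reduce hx hW] at h1
    have h4 := finrank_perp W
    have hin : i < n := by omega
    obtain ⟨m, hm⟩ : ∃ m, n = i + m := ⟨n - i, by omega⟩
    have h5 : Module.finrank F2 (perp W) = i + m + m := by omega
    have hlt : (2:ℝ) ^ i < 2 ^ n := pow_lt_pow_right₀ (by norm_num) hin
    rw [h5] at h1
    apply mul_left_cancel₀ (by linarith : (2:ℝ) ^ n - 2 ^ i ≠ 0)
    rw [← h1, Tc_step hin]
    have h6 : n - i = m := by omega
    rw [h6, hm]
    ring

theorem Nc_le_Tc {n : ℕ} (d : ℕ) : ∀ i, i + d = n →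
    Nc n i * (2 ^ d + 2) ≤ 3 * 2 ^ d * Tc n i := by
  induction d with
  | zero =>
    intro i h
    have : i = n := by omega
    subst this
    rw [Nc, Kc_self]
    simp [Tc]
    norm_num
  | succ d ih =>
    intro i h
    have h1 := ih (i + 1) (by omega)
    rw [Nc_step (by omega), Tc_step (by omega)]
    have e : n - i = d + 1 := by omega
    rw [e]
    set N := Nc n (i + 1)
    set T := Tc n (i + 1)
    have hN : 0 < N := Kc_pos (le_refl n)
    have hd : (1:ℝ) ≤ 2 ^ d := one_le_pow₀ (by norm_num)
    rw [pow_succ]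
    set q := (2:ℝ) ^ d
    have : (q * 2 + 1) * N * (q * 2 + 2) ≤ 4 * q * (N * (q + 2)) := by
      have : (q * 2 + 1) * (q * 2 + 2) ≤ 4 * q * (q + 2) := by nlinarith
      nlinarith
    have h2 : 4 * q * (N * (q + 2)) ≤ 4 * q * (3 * q * T) :=
      mul_le_mul_of_nonneg_left h1 (by positivity)
    linarith

theorem Nc_le_Tc' {n i : ℕ} (h : i ≤ n) : Nc n i ≤ 3 * Tc n i := by
  have h1 := Nc_le_Tc (n := n) (n - i) i (by omega)
  have hN : 0 < Nc n i := Kc_pos (le_refl n)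
  have hd : (0:ℝ) < 2 ^ (n - i) := by positivity
  apply le_of_mul_le_mul_left _ hd
  nlinarith

/-- Greedy existence of a common transversal. -/
theorem exists_trans {n : ℕ} {x x' z : Submodule F2 (PV n)} (hx : x ∈ Lset n n)
    (hx' : x' ∈ Lset n n) (d : ℕ) :
    ∀ W : Submodule F2 (PV n), IsIsotropic W → W ⊓ x = z → W ⊓ x' = z →
      Module.finrank F2 W + d = n → ∃ y ∈ Lset n n, y ⊓ x = z ∧ y ⊓ x' = z := by
  induction d with
  | zero => exact fun W hW h1 h2 h => ⟨W, ⟨hW, by omega⟩, h1, h2⟩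
  | succ d ih =>
    intro W hW h1 h2 h
    have r1 := finrank_reduce hx hW
    have r2 := finrank_reduce hx' hW
    have r3 := finrank_perp W
    have key : ∀ x0 : Submodule F2 (PV n), Module.finrank F2 ↥((W ⊔ x0) ⊓ perp W) = n →
        ∃ a ∈ perp W, a ∉ W ⊔ x0 := by
      intro x0 hr
      by_contra hc
      push Not at hc
      have : (W ⊔ x0) ⊓ perp W = perp W := inf_eq_right.2 hc
      rw [this] at hr
      omega
    obtain ⟨a, ha1, ha2⟩ := key x r1
    obtain ⟨b, hb1, hb2⟩ := key x' r2
    have : ∃ w ∈ perp W, w ∉ W ⊔ x ∧ w ∉ W ⊔ x' := by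
      by_cases hA : a ∈ W ⊔ x'
      · by_cases hB : b ∈ W ⊔ x
        · refine ⟨a + b, add_mem ha1 hb1, fun hc => ha2 ?_, fun hc => hb2 ?_⟩
          · have := add_mem hc hB
            rwa [add_assoc, PV_add_self, add_zero] at this
          · have := add_mem hA hc
            rwa [← add_assoc, PV_add_self, zero_add] at this
        · exact ⟨b, hb1, hB, hb2⟩
      · exact ⟨a, ha1, ha2, hA⟩
    obtain ⟨w, hw, hw1, hw2⟩ := this
    have hwW : w ∉ W := fun h => hw1 (Submodule.mem_sup_left h)
    exact ih _ (iso_sup_span hW hw) (sup_span_inf h1 hw1) (sup_span_inf h2 hw2)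
      (by rw [finrank_sup_span hwW]; omega)

end LV

section LV
open Classical

theorem neg_one_zpow_sg (m : ℤ) : (-1 : ℂ) ^ m = ((sg (m : F2) : ℝ) : ℂ) := by
  rcases Int.even_or_odd m with h | h
  · have : (m : F2) = 0 := by
      rw [ZMod.intCast_zmod_eq_zero_iff_dvd]; exact_mod_cast h.two_dvd
    rw [h.neg_one_zpow, this, sg_zero]; simp
  · have : (m : F2) ≠ 0 := by
      intro hc
      rw [ZMod.intCast_zmod_eq_zero_iff_dvd] at hc
      rw [← Int.not_even_iff_odd] at h
      exact h (even_iff_two_dvd.2 (by exact_mod_cast hc))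
    rw [h.neg_one_zpow, sg_ne this]; simp

theorem dotZ_cast {n : ℕ} (a b : Fin n → F2) :
    ((dotZ (liftZ a) (liftZ b) : ℤ) : F2) = ∑ i, a i * b i := by
  simp [dotZ, liftZ]

theorem neg_one_dotZ {n : ℕ} (a b : Fin n → F2) :
    (-1 : ℂ) ^ dotZ (liftZ a) (liftZ b) = ((sg (∑ i, a i * b i) : ℝ) : ℂ) := by
  rw [neg_one_zpow_sg, dotZ_cast]

/-- self pairing -/
noncomputable def dd {n : ℕ} (x : PV n) : ℤ := dotZ (liftZ x.1) (liftZ x.2)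

theorem I_zpow_sq (m : ℤ) : (Complex.I ^ m) ^ 2 = (-1 : ℂ) ^ m := by
  rw [← zpow_natCast, ← zpow_mul, mul_comm, zpow_mul]
  norm_num

theorem dd_cast {n : ℕ} (x : PV n) : ((dd x : ℤ) : F2) = ∑ i, x.1 i * x.2 i := dotZ_cast _ _

theorem sgC_sq (t : F2) : ((sg t : ℝ) : ℂ) ^ 2 = 1 := by
  rw [sq, ← Complex.ofReal_mul, sg_mul_self]; simp

theorem phase_sq {n : ℕ} (x y : PV n) : phase x y ^ 2 = ((sg (symp x y) : ℝ) : ℂ) := by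
  have e : phase x y = Complex.I ^ (dd x) * Complex.I ^ (dd y) * Complex.I ^ (-(dd (x + y))) *
    (-1 : ℂ) ^ (dotZ (liftZ x.2) (liftZ y.1)) := rfl
  rw [e, mul_pow, mul_pow, mul_pow, I_zpow_sq, I_zpow_sq, I_zpow_sq, neg_one_dotZ, sgC_sq,
    neg_one_zpow_sg, neg_one_zpow_sg, neg_one_zpow_sg, mul_one, ← Complex.ofReal_mul,
    ← Complex.ofReal_mul, ← sg_add, ← sg_add]
  congr 2
  rw [Int.cast_neg, dd_cast, dd_cast, dd_cast, ZMod.neg_eq_self_mod_two]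
  simp only [symp, ← Finset.sum_add_distrib]
  refine Finset.sum_congr rfl fun i _ => ?_
  simp only [Prod.fst_add, Prod.snd_add, Pi.add_apply]
  generalize x.1 i = a
  generalize x.2 i = b
  generalize y.1 i = c
  generalize y.2 i = d
  revert a b c d
  decide

theorem phase_re_comm {n : ℕ} {x y : PV n} (h : symp x y = 0) :
    (phase x y).re = sg (wght x y) := by
  have h1 := phase_sq x y
  rw [h, sg_zero, Complex.ofReal_one, sq_eq_one_iff] at h1
  unfold wght
  rcases h1 with h1 | h1
  · rw [h1]; simp [sg_zero]
  · have : (-1 : ℂ) ≠ 1 := by norm_num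
    rw [h1, if_neg this, sg_ne (by decide)]; simp

theorem phase_re_ncomm {n : ℕ} {x y : PV n} (h : symp x y ≠ 0) : (phase x y).re = 0 := by
  have h1 := phase_sq x y
  rw [sg_ne h] at h1
  have h2 := congrArg Complex.re h1
  have h3 := congrArg Complex.im h1
  simp only [sq, Complex.mul_re, Complex.mul_im, Complex.ofReal_re, Complex.ofReal_im] at h2 h3
  have h4 : (phase x y).re * (phase x y).im = 0 := by linarith
  rcases mul_eq_zero.1 h4 with h | h
  · exact h
  · rw [h] at h2
    nlinarith [mul_self_nonneg (phase x y).re]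

theorem phase_self {n : ℕ} (x : PV n) : phase x x = 1 := by
  have e : phase x x = Complex.I ^ (dd x) * Complex.I ^ (dd x) * Complex.I ^ (-(dd (x + x))) *
    (-1 : ℂ) ^ (dotZ (liftZ x.2) (liftZ x.1)) := rfl
  have e2 : dd (x + x) = 0 := by rw [PV_add_self]; simp [dd, dotZ, liftZ]
  have e3 : dotZ (liftZ x.2) (liftZ x.1) = dd x := by
    unfold dd dotZ
    exact Finset.sum_congr rfl fun i _ => mul_comm _ _
  rw [e, e2, e3, ← sq, I_zpow_sq, neg_zero, zpow_zero, mul_one, ← sq, neg_one_zpow_sg, sgC_sq]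

theorem phase_mul {n : ℕ} (x y : PV n) : phase x y * Complex.I ^ (dd (x + y)) =
    Complex.I ^ (dd x) * Complex.I ^ (dd y) * ((sg (∑ i, x.2 i * y.1 i) : ℝ) : ℂ) := by
  have e : phase x y = Complex.I ^ (dd x) * Complex.I ^ (dd y) * Complex.I ^ (-(dd (x + y))) *
    (-1 : ℂ) ^ (dotZ (liftZ x.2) (liftZ y.1)) := rfl
  have h : Complex.I ^ (-(dd (x + y))) * Complex.I ^ (dd (x + y)) = 1 := by
    rw [← zpow_add₀ Complex.I_ne_zero]; simp
  rw [e, neg_one_dotZ]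
  linear_combination (Complex.I ^ (dd x) * Complex.I ^ (dd y) *
    ((sg (∑ i, x.2 i * y.1 i) : ℝ) : ℂ)) * h

/-- Pauli matrices. -/
noncomputable def PW {n : ℕ} (v : PV n) : Matrix (Fin n → F2) (Fin n → F2) ℂ :=
  fun p q => if p = q + v.1 then Complex.I ^ (dd v) * ((sg (∑ i, v.2 i * q i) : ℝ) : ℂ) else 0

theorem PW_mul {n : ℕ} (x y : PV n) : PW x * PW y = phase x y • PW (x + y) := by
  ext p q
  rw [Matrix.mul_apply, Matrix.smul_apply, smul_eq_mul]
  rw [Finset.sum_eq_single (q + y.1)]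
  · simp only [PW, if_true]
    have : (p = q + y.1 + x.1) ↔ (p = q + (x + y).1) := by
      rw [Prod.fst_add, add_assoc, add_comm y.1]
    by_cases h : p = q + y.1 + x.1
    · rw [if_pos h, if_pos (this.1 h), ← mul_assoc (phase x y), phase_mul]
      have e1 : ∑ i, x.2 i * (q + y.1) i = ∑ i, x.2 i * q i + ∑ i, x.2 i * y.1 i := by
        simp only [Pi.add_apply, mul_add, Finset.sum_add_distrib]
      have e2 : ∑ i, (x + y).2 i * q i = ∑ i, x.2 i * q i + ∑ i, y.2 i * q i := by
        simp only [Prod.snd_add, Pi.add_apply, add_mul, Finset.sum_add_distrib]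
      rw [e1, e2, sg_add, sg_add]
      push_cast
      ring
    · rw [if_neg h, if_neg (fun hc => h (this.2 hc))]; simp
  · intro r _ hr
    simp [PW, hr]
  · intro h; exact absurd (Finset.mem_univ _) h

theorem sum_sg_dot {n : ℕ} (a : Fin n → F2) (h : a ≠ 0) :
    ∑ q : Fin n → F2, sg (∑ i, a i * q i) = 0 := by
  obtain ⟨i, hi⟩ : ∃ i, a i ≠ 0 := by
    by_contra hc
    push Not at hc
    exact h (funext hc)
  have h1 : ∑ q : Fin n → F2, sg (∑ j, a j * (q + (Pi.single i (1 : F2) : Fin n → F2)) j) =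
      ∑ q : Fin n → F2, sg (∑ i, a i * q i) :=
    Equiv.sum_comp (Equiv.addRight (Pi.single i (1 : F2) : Fin n → F2)) (fun q => sg (∑ i, a i * q i))
  have h2 : ∀ q : Fin n → F2, sg (∑ j, a j * (q + (Pi.single i (1 : F2) : Fin n → F2)) j) = - sg (∑ i, a i * q i) := by
    intro q
    have : ∑ j, a j * (q + (Pi.single i (1 : F2) : Fin n → F2)) j = (∑ j, a j * q j) + a i := by
      simp [mul_add, Finset.sum_add_distrib, Pi.single_apply]
    rw [this, sg_add, sg_ne hi]; ring
  simp only [h2, Finset.sum_neg_distrib] at h1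
  linarith

theorem PW_trace {n : ℕ} (v : PV n) : (PW v).trace = if v = 0 then (2:ℂ) ^ n else 0 := by
  unfold Matrix.trace
  simp only [Matrix.diag_apply, PW]
  have e : ∀ q : Fin n → F2, (q = q + v.1) ↔ v.1 = 0 := by
    intro q; simp
  simp only [e]
  split_ifs with h1 h2 h3
  · subst h2
    simp [dd, dotZ, liftZ, sg_zero]
  · have h3 : v.2 ≠ 0 := fun h => h2 (Prod.ext h1 h)
    rw [← Finset.mul_sum, ← Complex.ofReal_sum, sum_sg_dot _ h3]; simp
  · exact absurd (by rw [h3]; rfl) h1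
  · simp

theorem PW_herm {n : ℕ} (v : PV n) (p q : Fin n → F2) :
    (starRingEnd ℂ) (PW v q p) = PW v p q := by
  unfold PW
  have e : (q = p + v.1) ↔ (p = q + v.1) := by
    have hh : v.1 + v.1 = 0 := by ext i; simp [F2_add_self]
    constructor
    · rintro rfl; rw [add_assoc, hh, add_zero]
    · rintro rfl; rw [add_assoc, hh, add_zero]
  by_cases h : p = q + v.1
  · rw [if_pos (e.2 h), if_pos h, map_mul, Complex.conj_ofReal, map_zpow₀, Complex.conj_I]
    have e1 : ∑ i, v.2 i * p i = ∑ i, v.2 i * q i + ∑ i, v.1 i * v.2 i := by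
      rw [h]
      simp only [Pi.add_apply, mul_add, Finset.sum_add_distrib]
      congr 1
      exact Finset.sum_congr rfl fun i _ => mul_comm _ _
    rw [e1, sg_add, ← dd_cast]
    push_cast
    rw [← neg_one_zpow_sg]
    have e2 : (-Complex.I) ^ dd v * (-1) ^ dd v = Complex.I ^ dd v := by
      rw [← mul_zpow]; simp
    rw [← e2]; ring
  · rw [if_neg (fun hc => h (e.1 hc)), if_neg h]; simp

/-- the operator with Pauli coefficients `b` -/
noncomputable def PS {n : ℕ} (b : PV n → ℝ) : Matrix (Fin n → F2) (Fin n → F2) ℂ :=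
  ∑ v, (b v : ℂ) • PW v

theorem PS_herm {n : ℕ} (b : PV n → ℝ) (p q : Fin n → F2) :
    (starRingEnd ℂ) (PS b q p) = PS b p q := by
  unfold PS
  simp only [Matrix.sum_apply, Matrix.smul_apply, smul_eq_mul, map_sum, map_mul,
    Complex.conj_ofReal, PW_herm]

theorem PS_sq {n : ℕ} (b : PV n → ℝ) :
    PS b * PS b = ∑ x, ∑ y, ((b x : ℂ) * b y * phase x y) • PW (x + y) := by
  unfold PS
  rw [Finset.sum_mul_sum]
  refine Finset.sum_congr rfl fun x _ => Finset.sum_congr rfl fun y _ => ?_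
  rw [Matrix.smul_mul, Matrix.mul_smul, PW_mul, smul_smul, smul_smul]

theorem PW_trace_mul {n : ℕ} (x y : PV n) :
    (PW x * PW y).trace = if x = y then (2:ℂ) ^ n else 0 := by
  rw [PW_mul, Matrix.trace_smul, PW_trace, smul_eq_mul]
  by_cases h : x = y
  · subst h
    rw [if_pos (PV_add_self x), if_pos rfl, phase_self, one_mul]
  · rw [if_neg (fun hc => h (PV_add_eq_zero.1 hc)), if_neg h, mul_zero]

theorem PS_trace_sq {n : ℕ} (b : PV n → ℝ) :
    (PS b * PS b).trace = ((2 ^ n * ∑ v, b v ^ 2 : ℝ) : ℂ) := by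
  have : PS b * PS b = ∑ x, ∑ y, ((b x : ℂ) * b y) • (PW x * PW y) := by
    unfold PS
    rw [Finset.sum_mul_sum]
    refine Finset.sum_congr rfl fun x _ => Finset.sum_congr rfl fun y _ => ?_
    rw [Matrix.smul_mul, Matrix.mul_smul, smul_smul]
  rw [this]
  simp only [Matrix.trace_sum, Matrix.trace_smul, PW_trace_mul, smul_eq_mul]
  simp
  rw [Finset.mul_sum]
  exact Finset.sum_congr rfl fun x _ => by ring

theorem PS_trace_cube {n : ℕ} (b : PV n → ℝ) :
    ((PS b * PS b) * PS b).trace =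
      2 ^ n * ∑ x, ∑ y, (b x : ℂ) * b y * b (x + y) * phase x y := by
  have : (PS b * PS b) * PS b =
      ∑ x, ∑ y, ∑ w, ((b x : ℂ) * b y * phase x y * b w) • (PW (x + y) * PW w) := by
    rw [PS_sq, Finset.sum_mul]
    refine Finset.sum_congr rfl fun x _ => ?_
    rw [Finset.sum_mul]
    refine Finset.sum_congr rfl fun y _ => ?_
    rw [PS, Finset.mul_sum]
    refine Finset.sum_congr rfl fun w _ => ?_
    rw [Matrix.smul_mul, Matrix.mul_smul, smul_smul]
  rw [this]
  simp only [Matrix.trace_sum, Matrix.trace_smul, PW_trace_mul, smul_eq_mul]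
  simp
  rw [Finset.mul_sum]
  refine Finset.sum_congr rfl fun x _ => ?_
  rw [Finset.mul_sum]
  refine Finset.sum_congr rfl fun y _ => ?_
  ring

theorem PS_frob {n : ℕ} (b : PV n → ℝ) :
    ∑ p, ∑ q, ‖PS b p q‖ ^ 2 = 2 ^ n * ∑ v, b v ^ 2 := by
  have h := PS_trace_sq b
  have h1 : (PS b * PS b).trace = ((∑ p, ∑ q, ‖PS b p q‖ ^ 2 : ℝ) : ℂ) := by
    unfold Matrix.trace
    push_cast
    refine Finset.sum_congr rfl fun p _ => ?_
    rw [Matrix.diag_apply, Matrix.mul_apply]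
    refine Finset.sum_congr rfl fun q _ => ?_
    rw [← PS_herm b q p, Complex.mul_conj, Complex.normSq_eq_norm_sq]
    push_cast; rfl
  rw [h1] at h
  exact_mod_cast h

theorem cs_norm {ι : Type*} (s : Finset ι) (f g : ι → ℂ) :
    ‖∑ i ∈ s, f i * g i‖ ^ 2 ≤ (∑ i ∈ s, ‖f i‖ ^ 2) * ∑ i ∈ s, ‖g i‖ ^ 2 := by
  have h1 : ‖∑ i ∈ s, f i * g i‖ ≤ ∑ i ∈ s, ‖f i‖ * ‖g i‖ := by
    refine (norm_sum_le _ _).trans (le_of_eq ?_)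
    exact Finset.sum_congr rfl fun i _ => norm_mul _ _
  calc _ ≤ (∑ i ∈ s, ‖f i‖ * ‖g i‖) ^ 2 := pow_le_pow_left₀ (norm_nonneg _) h1 2
    _ ≤ _ := Finset.sum_mul_sq_le_sq_mul_sq _ _ _

theorem frob_mul {ι : Type*} [Fintype ι] (A B : Matrix ι ι ℂ) :
    ∑ p, ∑ q, ‖(A * B) p q‖ ^ 2 ≤ (∑ p, ∑ q, ‖A p q‖ ^ 2) * ∑ p, ∑ q, ‖B p q‖ ^ 2 := by
  rw [Finset.sum_mul]
  refine Finset.sum_le_sum fun p _ => ?_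
  rw [Finset.sum_comm (f := fun p q => ‖B p q‖ ^ 2), Finset.mul_sum]
  refine Finset.sum_le_sum fun q _ => ?_
  rw [Matrix.mul_apply]
  exact cs_norm _ _ _

theorem frob_trace {ι : Type*} [Fintype ι] (A B : Matrix ι ι ℂ) :
    ‖(A * B).trace‖ ^ 2 ≤ (∑ p, ∑ q, ‖A p q‖ ^ 2) * ∑ p, ∑ q, ‖B p q‖ ^ 2 := by
  unfold Matrix.trace
  simp only [Matrix.diag_apply, Matrix.mul_apply]
  rw [Finset.sum_comm (f := fun p q => ‖B p q‖ ^ 2), ← Fintype.sum_prod_type',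
    ← Fintype.sum_prod_type', ← Fintype.sum_prod_type']
  exact cs_norm _ (fun x : ι × ι => A x.1 x.2) (fun x : ι × ι => B x.2 x.1)

/-- The trilinear bound. -/
theorem tri_bound {n : ℕ} (b : PV n → ℝ) (hb : ∀ v, |b v| ≤ 1) :
    (∑ x, ∑ y, b x * b y * b (x + y) * (phase x y).re) ^ 2 ≤ 2 ^ (7 * n) := by
  have h1 := PS_trace_cube b
  have h2 := frob_trace (PS b * PS b) (PS b)
  have h3 := frob_mul (PS b) (PS b)
  have h4 := PS_frob b
  set S := ∑ v, b v ^ 2 with hS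
  have hS0 : 0 ≤ S := Finset.sum_nonneg fun _ _ => sq_nonneg _
  have hS1 : S ≤ 4 ^ n := by
    rw [← card_PV, hS]
    refine (Finset.sum_le_sum fun v _ => (sq_le_one_iff_abs_le_one _).2 (hb v)).trans ?_
    simp
  rw [h4] at h2 h3
  have h5 : ‖((PS b * PS b) * PS b).trace‖ ^ 2 ≤ (2 ^ n * S) ^ 3 := by
    refine h2.trans ?_
    refine (mul_le_mul_of_nonneg_right h3 (by positivity)).trans (le_of_eq (by ring))
  have h6 : (2 ^ n * S) ^ 3 ≤ (2 ^ n * 4 ^ n : ℝ) ^ 3 :=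
    pow_le_pow_left₀ (by positivity) (mul_le_mul_of_nonneg_left hS1 (by positivity)) 3
  rw [h1, norm_mul, mul_pow] at h5
  set Z := ∑ x, ∑ y, (b x : ℂ) * b y * b (x + y) * phase x y with hZ
  have h7 : ∑ x, ∑ y, b x * b y * b (x + y) * (phase x y).re = Z.re := by
    rw [hZ, Complex.re_sum]
    refine Finset.sum_congr rfl fun x _ => ?_
    rw [Complex.re_sum]
    refine Finset.sum_congr rfl fun y _ => ?_
    rw [← Complex.ofReal_mul, ← Complex.ofReal_mul, Complex.re_ofReal_mul]
  rw [h7]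
  have h8 : Z.re ^ 2 ≤ ‖Z‖ ^ 2 := sq_le_sq.2 (by
    rw [abs_of_nonneg (norm_nonneg Z)]; exact Complex.abs_re_le_norm Z)
  refine h8.trans ?_
  have h9 : ‖(2:ℂ) ^ n‖ = 2 ^ n := by simp
  rw [h9] at h5
  have c : (0:ℝ) < (2 ^ n) ^ 2 := by positivity
  apply le_of_mul_le_mul_left _ c
  refine h5.trans (h6.trans (le_of_eq ?_))
  have : (4:ℝ) ^ n = 2 ^ n * 2 ^ n := by rw [← mul_pow]; norm_num
  rw [this]
  ring

end LV

section LV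
open Classical

noncomputable def Fs {n : ℕ} (f : (S : Submodule F2 (PV n)) → (S → F2)) (v : PV n)
    (x : Submodule F2 (PV n)) : ℝ := if h : v ∈ x then sg (f x ⟨v, h⟩) else 0

theorem Fs_abs {n : ℕ} (f : (S : Submodule F2 (PV n)) → (S → F2)) (v : PV n)
    (x : Submodule F2 (PV n)) : |Fs f v x| ≤ 1 := by
  unfold Fs
  split_ifs
  · rw [sg_abs]
  · simp

theorem Fs_mem {n : ℕ} (f : (S : Submodule F2 (PV n)) → (S → F2)) {v : PV n}
    {x : Submodule F2 (PV n)} (h : v ∈ x) : Fs f v x = sg (f x ⟨v, h⟩) := by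
  simp [Fs, h]

theorem Fs_sq {n : ℕ} (f : (S : Submodule F2 (PV n)) → (S → F2)) {v : PV n}
    {x : Submodule F2 (PV n)} (h : v ∈ x) : Fs f v x * Fs f v x = 1 := by
  rw [Fs_mem f h, sg_mul_self]

theorem Fs_mul {n : ℕ} {f : (S : Submodule F2 (PV n)) → (S → F2)}
    (hf : ∀ S ∈ Lset n n, IsOutcome S (f S)) {x : Submodule F2 (PV n)} (hx : x ∈ Lset n n)
    {a b : PV n} (ha : a ∈ x) (hb : b ∈ x) :
    Fs f a x * Fs f b x = (phase a b).re * Fs f (a + b) x := by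
  have h := hf x hx ⟨a, ha⟩ ⟨b, hb⟩
  have hab : a + b ∈ x := x.add_mem ha hb
  rw [Fs_mem f ha, Fs_mem f hb, Fs_mem f hab, phase_re_comm (hx.1 a ha b hb)]
  have e : f x ⟨a + b, hab⟩ = f x ⟨a, ha⟩ + f x ⟨b, hb⟩ + wght a b := h
  rw [e, sg_add, sg_add]
  have := sg_mul_self (wght a b)
  linear_combination (-(sg (f x ⟨a, ha⟩) * sg (f x ⟨b, hb⟩))) * this

noncomputable def be {n : ℕ} (f : (S : Submodule F2 (PV n)) → (S → F2)) (v : PV n) : ℝ :=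
  bavg (Fs f v) (Submodule.span F2 {v})

noncomputable def be0 {n : ℕ} (f : (S : Submodule F2 (PV n)) → (S → F2)) (v : PV n) : ℝ :=
  if v = 0 then 0 else be f v

theorem iso_span {n : ℕ} (v : PV n) : IsIsotropic (Submodule.span F2 {v}) := by
  intro x hx y hy
  rcases mem_span1.1 hx with rfl | rfl
  · simp [symp]
  · rcases mem_span1.1 hy with rfl | rfl
    · simp [symp]
    · exact symp_self _

theorem iso_bot {n : ℕ} : IsIsotropic (⊥ : Submodule F2 (PV n)) := by
  intro x hx y hy
  rw [Submodule.mem_bot] at hx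
  subst hx
  simp [symp]

theorem frs {n : ℕ} {v : PV n} (h : v ≠ 0) : Module.finrank F2 (Submodule.span F2 {v}) = 1 :=
  finrank_span_singleton h

theorem mem_perp_span {n : ℕ} {v w : PV n} :
    w ∈ perp (Submodule.span F2 {v}) ↔ symp v w = 0 := by
  rw [mem_perp]
  constructor
  · intro h; exact h v (Submodule.mem_span_singleton_self v)
  · intro h x hx
    rcases mem_span1.1 hx with rfl | rfl
    · simp [symp]
    · exact h

theorem mem_outs_bot {n : ℕ} {z : Submodule F2 (PV n)} {w : PV n} :
    w ∈ outs ⊥ z ↔ w ∈ z ∧ w ≠ 0 := by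
  rw [mem_outs, Submodule.mem_bot]

theorem mem_outs_bot_perp {n : ℕ} {w : PV n} :
    w ∈ outs ⊥ (perp (⊥ : Submodule F2 (PV n))) ↔ w ≠ 0 := by
  rw [mem_outs_bot, mem_perp]
  constructor
  · exact fun h => h.2
  · refine fun h => ⟨?_, h⟩
    intro x hx
    rw [Submodule.mem_bot] at hx
    subst hx
    simp [symp]

noncomputable def EE {n : ℕ} (f : (S : Submodule F2 (PV n)) → (S → F2)) : ℝ :=
  ∑ w ∈ outs ⊥ (perp (⊥ : Submodule F2 (PV n))), be f w ^ 2

theorem be_abs {n : ℕ} (f : (S : Submodule F2 (PV n)) → (S → F2)) (v : PV n) : |be f v| ≤ 1 :=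
  bavg_abs _ (Fs_abs f v) (iso_span v)

theorem be0_abs {n : ℕ} (f : (S : Submodule F2 (PV n)) → (S → F2)) (v : PV n) :
    |be0 f v| ≤ 1 := by
  unfold be0
  split_ifs
  · simp
  · exact be_abs f v

theorem EE_nonneg {n : ℕ} (f : (S : Submodule F2 (PV n)) → (S → F2)) : 0 ≤ EE f :=
  Finset.sum_nonneg fun _ _ => sq_nonneg _

theorem card_le_PV {n : ℕ} (s : Finset (PV n)) : (s.card : ℝ) ≤ 4 ^ n := by
  rw [← card_PV]
  exact_mod_cast Finset.card_le_univ s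

theorem EE_le {n : ℕ} (f : (S : Submodule F2 (PV n)) → (S → F2)) : EE f ≤ 4 ^ n := by
  refine (Finset.sum_le_sum fun v _ => (sq_le_one_iff_abs_le_one _).2 (be_abs f v)).trans ?_
  rw [Finset.sum_const, nsmul_eq_mul, mul_one]
  exact card_le_PV _

noncomputable def rho {n : ℕ} (f : (S : Submodule F2 (PV n)) → (S → F2))
    (x : Submodule F2 (PV n)) : ℝ := ∑ a ∈ outs ⊥ x, be f a * Fs f a x

theorem rho_sum {n : ℕ} (f : (S : Submodule F2 (PV n)) → (S → F2)) :
    ∑ x ∈ above n ⊥, rho f x = Nc n 1 * EE f := by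
  unfold rho
  rw [← sum_swap ⊥ (fun x a => be f a * Fs f a x), EE, Finset.mul_sum]
  refine Finset.sum_congr rfl fun a ha => ?_
  rw [bot_sup_eq, ← Finset.mul_sum, sum_bavg, frs (mem_outs_bot_perp.1 ha), be]
  ring

theorem rho_sq {n : ℕ} {f : (S : Submodule F2 (PV n)) → (S → F2)}
    (hf : ∀ S ∈ Lset n n, IsOutcome S (f S)) :
    ∑ x ∈ above n ⊥, rho f x ^ 2 = Nc n 1 * EE f + Nc n 2 *
      ∑ a ∈ outs ⊥ (perp (⊥ : Submodule F2 (PV n))),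
        ∑ b ∈ outs (Submodule.span F2 {a}) (perp (Submodule.span F2 {a})),
          be f a * be f b * (phase a b).re *
            bavg (Fs f (a + b)) (Submodule.span F2 {a} ⊔ Submodule.span F2 {b}) := by
  have h1 : ∑ x ∈ above n ⊥, rho f x ^ 2 = ∑ x ∈ above n ⊥, ∑ a ∈ outs ⊥ x,
      (be f a * Fs f a x * rho f x) := by
    refine Finset.sum_congr rfl fun x _ => ?_
    rw [← Finset.sum_mul, sq]; rfl
  rw [h1, ← sum_swap ⊥ (fun x a => be f a * Fs f a x * rho f x), EE, Finset.mul_sum,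
    Finset.mul_sum, ← Finset.sum_add_distrib]
  refine Finset.sum_congr rfl fun a ha => ?_
  have ha0 := mem_outs_bot_perp.1 ha
  rw [bot_sup_eq]
  have h2 : ∀ x ∈ above n (Submodule.span F2 {a}), be f a * Fs f a x * rho f x =
      be f a ^ 2 + ∑ b ∈ outs (Submodule.span F2 {a}) x,
        be f a * be f b * (phase a b).re * Fs f (a + b) x := by
    intro x hx
    obtain ⟨hx1, hx2⟩ := mem_above.1 hx
    have hax := span_le'.1 hx2
    have e : outs ⊥ x = insert a (outs (Submodule.span F2 {a}) x) := by
      ext b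
      simp only [mem_outs_bot, Finset.mem_insert, mem_outs, mem_span1]
      constructor
      · rintro ⟨h1, h2⟩
        by_cases h : b = a
        · exact Or.inl h
        · exact Or.inr ⟨h1, by tauto⟩
      · rintro (rfl | ⟨h1, h2⟩)
        · exact ⟨hax, ha0⟩
        · exact ⟨h1, by tauto⟩
    have hn : a ∉ outs (Submodule.span F2 {a}) x := by
      simp [mem_outs, mem_span1]
    rw [rho, e, Finset.sum_insert hn, mul_add, Finset.mul_sum]
    congr 1
    · linear_combination (be f a ^ 2) * Fs_sq f hax
    · refine Finset.sum_congr rfl fun b hb => ?_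
      have := Fs_mul hf hx1 hax (mem_outs.1 hb).1
      linear_combination (be f a * be f b) * this
  rw [Finset.sum_congr rfl h2, Finset.sum_add_distrib, Finset.sum_const, nsmul_eq_mul,
    card_aboveN (iso_span a), frs ha0,
    ← sum_swap (Submodule.span F2 {a}) (fun x b => be f a * be f b * (phase a b).re *
      Fs f (a + b) x), Finset.mul_sum]
  congr 1
  refine Finset.sum_congr rfl fun b hb => ?_
  rw [← Finset.mul_sum, sum_bavg, finrank_sup_span (mem_outs.1 hb).2, frs ha0]
  ring

theorem phase_re_abs {n : ℕ} (a b : PV n) : |(phase a b).re| ≤ 1 := by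
  by_cases h : symp a b = 0
  · rw [phase_re_comm h, sg_abs]
  · rw [phase_re_ncomm h]; simp

noncomputable def DD {n : ℕ} (f : (S : Submodule F2 (PV n)) → (S → F2)) (c a : PV n) : ℝ :=
  if c = 0 then 0 else |dev (Fs f c) (Submodule.span F2 {c}) a|

theorem DD_nonneg {n : ℕ} (f : (S : Submodule F2 (PV n)) → (S → F2)) (c a : PV n) :
    0 ≤ DD f c a := by
  unfold DD; split_ifs <;> simp

theorem term_le {n : ℕ} (f : (S : Submodule F2 (PV n)) → (S → F2)) {a b : PV n} (ha : a ≠ 0)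
    (hb : b ∈ outs (Submodule.span F2 {a}) (perp (Submodule.span F2 {a}))) :
    be f a * be f b * (phase a b).re *
      bavg (Fs f (a + b)) (Submodule.span F2 {a} ⊔ Submodule.span F2 {b}) ≤
    be0 f a * be0 f b * be0 f (a + b) * (phase a b).re + DD f (a + b) a := by
  obtain ⟨hb1, hb2⟩ := mem_outs.1 hb
  have hs := mem_perp_span.1 hb1
  rw [mem_span1] at hb2
  push Not at hb2
  have hc : a + b ≠ 0 := fun h => hb2.2 (PV_add_eq_zero.1 h).symm
  have e : Submodule.span F2 {a} ⊔ Submodule.span F2 {b} =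
      Submodule.span F2 {a + b} ⊔ Submodule.span F2 {a} := by
    apply le_antisymm
    · refine sup_le le_sup_right (span_le'.2 (mem_sup_span.2 (Or.inr ?_)))
      rw [add_comm]; exact Submodule.mem_span_singleton_self _
    · refine sup_le (span_le'.2 (mem_sup_span.2 (Or.inr ?_))) le_sup_left
      rw [add_assoc, PV_add_self, add_zero]; exact Submodule.mem_span_singleton_self _
  have ho : a ∈ outs (Submodule.span F2 {a + b}) (perp (Submodule.span F2 {a + b})) := by
    rw [mem_outs, mem_perp_span, mem_span1, symp_add_left, symp_self, symp_comm b a, hs]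
    refine ⟨by simp, ?_⟩
    rintro (h | h)
    · exact ha h
    · exact hb2.1 (by simpa using h)
  have e2 : bavg (Fs f (a + b)) (Submodule.span F2 {a} ⊔ Submodule.span F2 {b}) =
      be f (a + b) + dev (Fs f (a + b)) (Submodule.span F2 {a + b}) a := by
    rw [dev, if_pos ho, e, be]; ring
  rw [e2, be0, be0, be0, if_neg ha, if_neg hb2.1, if_neg hc, DD, if_neg hc]
  have h1 : |be f a * be f b * (phase a b).re| ≤ 1 := by
    rw [abs_mul, abs_mul]
    exact mul_le_one₀ (mul_le_one₀ (be_abs f a) (abs_nonneg _) (be_abs f b)) (abs_nonneg _)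
      (phase_re_abs a b)
  have h2 : be f a * be f b * (phase a b).re *
      dev (Fs f (a + b)) (Submodule.span F2 {a + b}) a ≤
      |dev (Fs f (a + b)) (Submodule.span F2 {a + b}) a| := by
    refine (le_abs_self _).trans ?_
    rw [abs_mul]
    exact mul_le_of_le_one_left (abs_nonneg _) h1
  linarith

theorem DD_sum {k : ℕ} (hk : 2 ≤ k) (f : (S : Submodule F2 (PV (2 * k))) → (S → F2))
    (c : PV (2 * k)) : ∑ a, DD f c a ≤ 2 ^ (3 * k) := by
  by_cases hc : c = 0
  · simp [DD, hc]
  · have h1 := dev_sq (Fs f c) (Fs_abs f c) (iso_span c) (by rw [frs hc]; omega)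
    have h2 : ∑ a, DD f c a = ∑ a ∈ outs (Submodule.span F2 {c}) (perp (Submodule.span F2 {c})),
        |dev (Fs f c) (Submodule.span F2 {c}) a| := by
      simp only [DD, if_neg hc]
      symm
      apply Finset.sum_subset_zero_on_sdiff (Finset.subset_univ _)
      · intro w hw
        rw [dev, if_neg (Finset.mem_sdiff.1 hw).2, abs_zero]
      · intro _ _; rfl
    have h3 := sq_sum_le_card_mul_sum_sq (α := ℝ)
      (s := outs (Submodule.span F2 {c}) (perp (Submodule.span F2 {c})))
      (f := fun a => |dev (Fs f c) (Submodule.span F2 {c}) a|)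
    rw [← h2, card_outs_perp (iso_span c), frs hc] at h3
    have h4 : ∑ a ∈ outs (Submodule.span F2 {c}) (perp (Submodule.span F2 {c})),
        |dev (Fs f c) (Submodule.span F2 {c}) a| ^ 2 ≤ 2 * 2 ^ (2 * k) := by
      refine le_trans ?_ h1
      simp only [sq_abs]
      exact Finset.sum_le_sum_of_subset_of_nonneg (Finset.subset_univ _) fun _ _ _ => sq_nonneg _
    have h5 : (∑ a, DD f c a) ^ 2 ≤ (2 ^ (3 * k)) ^ 2 := by
      refine h3.trans ?_
      have e : (2:ℝ) ^ (2 * (2 * k) - 1) * 2 = 2 ^ (4 * k) := by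
        rw [← pow_succ]; congr 1; omega
      calc _ ≤ (2:ℝ) ^ (2 * (2 * k) - 1) * (2 * 2 ^ (2 * k)) := by
            apply mul_le_mul _ h4 (Finset.sum_nonneg fun _ _ => sq_nonneg _) (by positivity)
            have : (0:ℝ) ≤ 2 ^ 1 := by positivity
            linarith
        _ = 2 ^ (4 * k) * 2 ^ (2 * k) := by rw [← e]; ring
        _ = _ := by rw [← pow_add, ← pow_mul]; congr 1; ring
    exact le_of_sq_le_sq h5 (by positivity)

end LV

section LV
open Classical

theorem main_term {k : ℕ} (hk : 2 ≤ k) (f : (S : Submodule F2 (PV (2 * k))) → (S → F2)) :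
    ∑ a ∈ outs ⊥ (perp (⊥ : Submodule F2 (PV (2 * k)))),
        ∑ b ∈ outs (Submodule.span F2 {a}) (perp (Submodule.span F2 {a})),
          be f a * be f b * (phase a b).re *
            bavg (Fs f (a + b)) (Submodule.span F2 {a} ⊔ Submodule.span F2 {b})
      ≤ 2 * 2 ^ (7 * k) := by
  have h1 : ∑ a ∈ outs ⊥ (perp (⊥ : Submodule F2 (PV (2 * k)))),
        ∑ b ∈ outs (Submodule.span F2 {a}) (perp (Submodule.span F2 {a})),
          be f a * be f b * (phase a b).re *
            bavg (Fs f (a + b)) (Submodule.span F2 {a} ⊔ Submodule.span F2 {b}) ≤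
      ∑ a ∈ outs ⊥ (perp (⊥ : Submodule F2 (PV (2 * k)))),
        ∑ b ∈ outs (Submodule.span F2 {a}) (perp (Submodule.span F2 {a})),
        (be0 f a * be0 f b * be0 f (a + b) * (phase a b).re + DD f (a + b) a) :=
    Finset.sum_le_sum fun a ha => Finset.sum_le_sum fun b hb =>
      term_le f (mem_outs_bot_perp.1 ha) hb
  refine h1.trans ?_
  simp only [Finset.sum_add_distrib]
  have h2 : ∑ a ∈ outs ⊥ (perp (⊥ : Submodule F2 (PV (2 * k)))),
        ∑ b ∈ outs (Submodule.span F2 {a}) (perp (Submodule.span F2 {a})),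
          be0 f a * be0 f b * be0 f (a + b) * (phase a b).re =
      ∑ a, ∑ b, be0 f a * be0 f b * be0 f (a + b) * (phase a b).re := by
    have hin : ∀ a : PV (2 * k),
        ∑ b ∈ outs (Submodule.span F2 {a}) (perp (Submodule.span F2 {a})),
          be0 f a * be0 f b * be0 f (a + b) * (phase a b).re =
        ∑ b, be0 f a * be0 f b * be0 f (a + b) * (phase a b).re := by
      intro a
      apply Finset.sum_subset_zero_on_sdiff (Finset.subset_univ _)
      · intro b hb
        have hb := (Finset.mem_sdiff.1 hb).2
        rw [mem_outs, mem_perp_span, mem_span1] at hb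
        by_cases hs : symp a b = 0
        · have : b = 0 ∨ b = a := by tauto
          rcases this with rfl | rfl
          · simp [be0]
          · rw [PV_add_self]; simp [be0]
        · rw [phase_re_ncomm hs, mul_zero]
      · intro _ _; rfl
    simp only [hin]
    apply Finset.sum_subset_zero_on_sdiff (Finset.subset_univ _)
    · intro a ha
      have ha := (Finset.mem_sdiff.1 ha).2
      rw [mem_outs_bot_perp] at ha
      push Not at ha
      subst ha
      simp [be0]
    · intro _ _; rfl
  have h3 := tri_bound (be0 f) (be0_abs f)
  have h4 : ∑ a, ∑ b, be0 f a * be0 f b * be0 f (a + b) * (phase a b).re ≤ 2 ^ (7 * k) := by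
    have e : (2:ℝ) ^ (7 * (2 * k)) = (2 ^ (7 * k)) ^ 2 := by rw [← pow_mul]; congr 1; ring
    rw [e] at h3
    exact (abs_le_of_sq_le_sq' h3 (by positivity)).2
  have h5 : ∑ a ∈ outs ⊥ (perp (⊥ : Submodule F2 (PV (2 * k)))),
        ∑ b ∈ outs (Submodule.span F2 {a}) (perp (Submodule.span F2 {a})), DD f (a + b) a ≤
      ∑ a, ∑ b, DD f (a + b) a := by
    refine (Finset.sum_le_sum fun a _ => Finset.sum_le_sum_of_subset_of_nonneg
      (Finset.subset_univ _) fun _ _ _ => DD_nonneg _ _ _).trans ?_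
    exact Finset.sum_le_sum_of_subset_of_nonneg
      (Finset.subset_univ _) fun _ _ _ => Finset.sum_nonneg fun _ _ => DD_nonneg _ _ _
  have h6 : ∑ a, ∑ b, DD f (a + b) a = ∑ c, ∑ a, DD f c a := by
    rw [Finset.sum_comm (f := fun c a => DD f c a)]
    exact Finset.sum_congr rfl fun a _ => Equiv.sum_comp (Equiv.addLeft a) (fun c => DD f c a)
  have h7 : ∑ c, ∑ a, DD f c a ≤ 2 ^ (7 * k) := by
    refine (Finset.sum_le_sum fun c _ => DD_sum hk f c).trans (le_of_eq ?_)
    rw [Finset.sum_const, nsmul_eq_mul, Finset.card_univ, card_PV]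
    rw [show (4:ℝ) = 2 ^ 2 by norm_num, ← pow_mul, ← pow_add]; congr 1; ring
  rw [h2]
  linarith

theorem EE_bound {k : ℕ} (hk : 2 ≤ k) {f : (S : Submodule F2 (PV (2 * k))) → (S → F2)}
    (hf : ∀ S ∈ Lset (2 * k) (2 * k), IsOutcome S (f S)) :
    EE f ^ 2 ≤ 6 * 2 ^ (7 * k) := by
  have h1 := rho_sum f
  have h2 := rho_sq hf
  have h3 := main_term hk f
  have h4 := sq_sum_le_card_mul_sum_sq (α := ℝ)
      (s := above (2 * k) (⊥ : Submodule F2 (PV (2 * k)))) (f := fun x => rho f x)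
  rw [h1, h2, card_aboveN iso_bot, finrank_bot] at h4
  have N2 : 0 < Nc (2 * k) 2 := Kc_pos (le_refl _)
  have s0 := Nc_step (n := 2 * k) (j := 0) (by omega)
  have s1 := Nc_step (n := 2 * k) (j := 1) (by omega)
  norm_num only [zero_add, Nat.sub_zero] at s0 s1
  set P : ℝ := 2 ^ (2 * k - 1) with hP
  have eP : (2:ℝ) ^ (2 * k) = 2 * P := by rw [hP, ← pow_succ']; congr 1; omega
  have hP1 : 1 ≤ P := one_le_pow₀ (by norm_num)
  rw [eP] at s0
  have hE := EE_le f
  have hE0 := EE_nonneg f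
  have e3 : (2:ℝ) ^ (2 * k) * 4 ^ (2 * k) ≤ 2 ^ (7 * k) := by
    rw [show (4:ℝ) = 2 ^ 2 by norm_num, ← pow_mul, ← pow_add]
    exact pow_le_pow_right₀ (by norm_num) (by omega)
  set Q : ℝ := 2 ^ (7 * k)
  set M := ∑ a ∈ outs ⊥ (perp (⊥ : Submodule F2 (PV (2 * k)))),
        ∑ b ∈ outs (Submodule.span F2 {a}) (perp (Submodule.span F2 {a})),
          be f a * be f b * (phase a b).re *
            bavg (Fs f (a + b)) (Submodule.span F2 {a} ⊔ Submodule.span F2 {b})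
  have hQ : 0 ≤ Q := by positivity
  have h5 : Nc (2 * k) 1 * EE f ≤ Nc (2 * k) 2 * Q := by
    calc Nc (2 * k) 1 * EE f ≤ (2 ^ (2 * k) * Nc (2 * k) 2) * 4 ^ (2 * k) := by
          apply mul_le_mul _ hE hE0 (by positivity)
          rw [s1, eP]
          nlinarith
      _ = Nc (2 * k) 2 * (2 ^ (2 * k) * 4 ^ (2 * k)) := by ring
      _ ≤ _ := mul_le_mul_of_nonneg_left e3 N2.le
  have h6 : Nc (2 * k) 1 * EE f + Nc (2 * k) 2 * M ≤ Nc (2 * k) 2 * (3 * Q) := by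
    nlinarith
  have N0 : 0 < Nc (2 * k) 0 := Kc_pos (le_refl _)
  have h7 : (Nc (2 * k) 1 * EE f) ^ 2 ≤ Nc (2 * k) 0 * (Nc (2 * k) 2 * (3 * Q)) :=
    h4.trans (mul_le_mul_of_nonneg_left h6 N0.le)
  have h8 : Nc (2 * k) 0 * Nc (2 * k) 2 ≤ 2 * Nc (2 * k) 1 ^ 2 := by
    rw [s0, s1]
    have : 0 ≤ Nc (2 * k) 2 ^ 2 * (P + 1) := by positivity
    nlinarith
  have N1 : 0 < Nc (2 * k) 1 ^ 2 := pow_pos (Kc_pos (le_refl _)) 2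
  apply le_of_mul_le_mul_left _ N1
  nlinarith

end LV

section LV
open Classical

noncomputable def Dset (n k : ℕ) : Finset (Submodule F2 (PV n) × Submodule F2 (PV n)) :=
  univ.filter (fun p => p.1 ∈ Lset n n ∧ p.2 ∈ Lset n n ∧ Module.finrank F2 ↥(p.1 ⊓ p.2) = k)

noncomputable def Cset {n : ℕ} (k : ℕ) (f g : (S : Submodule F2 (PV n)) → (S → F2)) :
    Finset (Submodule F2 (PV n) × Submodule F2 (PV n)) :=
  univ.filter (fun p => p.1 ∈ Lset n n ∧ p.2 ∈ Lset n n ∧ Module.finrank F2 ↥(p.1 ⊓ p.2) = k ∧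
    ConsistentOn (f p.1) (g p.2))

theorem iso_mono {n : ℕ} {u v : Submodule F2 (PV n)} (h : u ≤ v) (hv : IsIsotropic v) :
    IsIsotropic u := fun x hx y hy => hv x (h hx) y (h hy)

theorem card_D {n k : ℕ} (hk : k ≤ n) :
    ((Dset n k).card : ℝ) = Kc n k 0 * (Nc n k * Tc n k) := by
  have hmap : ∀ p ∈ Dset n k, p.1 ⊓ p.2 ∈ above k (⊥ : Submodule F2 (PV n)) := by
    intro p hp
    simp only [Dset, mem_filter, mem_univ, true_and] at hp
    exact mem_above.2 ⟨⟨iso_mono inf_le_left hp.1.1, hp.2.2⟩, bot_le⟩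
  rw [Finset.card_eq_sum_card_fiberwise hmap]
  push_cast
  have hz : ∀ z ∈ above k (⊥ : Submodule F2 (PV n)),
      (((Dset n k).filter (fun p => p.1 ⊓ p.2 = z)).card : ℝ) = Nc n k * Tc n k := by
    intro z hz
    obtain ⟨hz1, -⟩ := mem_above.1 hz
    have e : (Dset n k).filter (fun p => p.1 ⊓ p.2 = z) =
        ((above n z) ×ˢ (above n z)).filter (fun p => p.1 ⊓ p.2 = z) := by
      ext p
      simp only [Dset, mem_filter, mem_univ, true_and, mem_product, mem_above]
      constructor
      · rintro ⟨⟨h1, h2, h3⟩, h4⟩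
        exact ⟨⟨⟨h1, h4 ▸ inf_le_left⟩, ⟨h2, h4 ▸ inf_le_right⟩⟩, h4⟩
      · rintro ⟨⟨⟨h1, h2⟩, ⟨h3, h4⟩⟩, h5⟩
        exact ⟨⟨h1, h3, by rw [h5]; exact hz1.2⟩, h5⟩
    rw [e, Finset.card_filter, Finset.sum_product]
    push_cast
    have hx : ∀ x ∈ above n z, (∑ y ∈ above n z, if x ⊓ y = z then (1:ℝ) else 0) = Tc n k := by
      intro x hx
      obtain ⟨h1, h2⟩ := mem_above.1 hx
      have := card_trans (z := z) h1 (n - k) z hz1.1 (inf_eq_left.2 h2) (by rw [hz1.2]; omega)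
      rw [hz1.2] at this
      rw [← this, Finset.card_filter]
      push_cast; rfl
    rw [Finset.sum_congr rfl hx, Finset.sum_const, nsmul_eq_mul, card_aboveN hz1.1, hz1.2]
  rw [Finset.sum_congr rfl hz, Finset.sum_const, nsmul_eq_mul,
    card_above hk k ⊥ iso_bot (by rw [finrank_bot]; omega), finrank_bot]

theorem char_sum {n : ℕ} {f g : (S : Submodule F2 (PV n)) → (S → F2)}
    (hf : ∀ S ∈ Lset n n, IsOutcome S (f S)) (hg : ∀ S ∈ Lset n n, IsOutcome S (g S))
    {x y z : Submodule F2 (PV n)} (hx : x ∈ Lset n n) (hy : y ∈ Lset n n)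
    (hzx : z ≤ x) (hzy : z ≤ y) :
    (2:ℝ) ^ (Module.finrank F2 z) * (if (∀ v ∈ z, Fs f v x = Fs g v y) then (1:ℝ) else 0) ≤
      ∑ v with v ∈ z, Fs f v x * Fs g v y := by
  split_ifs with h
  · rw [mul_one, ← card_sub z, Finset.card_eq_sum_ones]
    push_cast
    refine Finset.sum_le_sum fun v hv => ?_
    have hv := (Finset.mem_filter.1 hv).2
    rw [h v hv, Fs_sq g (hzy hv)]
  · push Not at h
    obtain ⟨a, haz, ha⟩ := h
    rw [mul_zero]
    set Sm := ∑ v with v ∈ z, Fs f v x * Fs g v y with hS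
    have h1 : Fs f a x * Fs g a y = -1 := by
      have e1 := Fs_sq f (hzx haz)
      have e2 := Fs_sq g (hzy haz)
      rcases mul_self_eq_one_iff.1 e1 with h | h <;> rcases mul_self_eq_one_iff.1 e2 with h' | h'
      · exact absurd (h.trans h'.symm) ha
      · rw [h, h']; norm_num
      · rw [h, h']; norm_num
      · exact absurd (h.trans h'.symm) ha
    have h2 : Sm = - Sm := by
      have e3 : Sm = ∑ v : PV n, if v ∈ z then Fs f v x * Fs g v y else 0 := by
        rw [hS, Finset.sum_filter]
      conv_lhs => rw [e3]
      rw [← Equiv.sum_comp (Equiv.addLeft a), e3, ← Finset.sum_neg_distrib]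
      refine Finset.sum_congr rfl fun v _ => ?_
      have e7 : (Equiv.addLeft a) v = a + v := rfl
      rw [e7]
      by_cases hv : v ∈ z
      · rw [if_pos (z.add_mem haz hv), if_pos hv]
        have e4 := Fs_mul hf hx (hzx haz) (hzx hv)
        have e5 := Fs_mul hg hy (hzy haz) (hzy hv)
        have e6 : (phase a v).re * (phase a v).re = 1 := by
          rw [phase_re_comm (hx.1 a (hzx haz) v (hzx hv)), sg_mul_self]
        calc Fs f (a + v) x * Fs g (a + v) y =
              ((phase a v).re * Fs f (a + v) x) * ((phase a v).re * Fs g (a + v) y) := by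
                linear_combination (-(Fs f (a + v) x * Fs g (a + v) y)) * e6
          _ = (Fs f a x * Fs g a y) * (Fs f v x * Fs g v y) := by rw [← e4, ← e5]; ring
          _ = _ := by rw [h1]; ring
      · have : a + v ∉ z := fun h => hv ((Submodule.add_mem_iff_right z haz).1 h)
        rw [if_neg this, if_neg hv, neg_zero]
    linarith

noncomputable def GG {n : ℕ} (k : ℕ) (f : (S : Submodule F2 (PV n)) → (S → F2)) : ℝ :=
  ∑ z ∈ above k (⊥ : Submodule F2 (PV n)), ∑ v with v ∈ z, bavg (Fs f v) z ^ 2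

theorem card_C {n k : ℕ} {f g : (S : Submodule F2 (PV n)) → (S → F2)}
    (hf : ∀ S ∈ Lset n n, IsOutcome S (f S)) (hg : ∀ S ∈ Lset n n, IsOutcome S (g S)) :
    2 ^ k * ((Cset k f g).card : ℝ) ≤ Nc n k ^ 2 * ((GG k f + GG k g) / 2) := by
  have hmap : ∀ p ∈ Cset k f g, p.1 ⊓ p.2 ∈ above k (⊥ : Submodule F2 (PV n)) := by
    intro p hp
    simp only [Cset, mem_filter, mem_univ, true_and] at hp
    exact mem_above.2 ⟨⟨iso_mono inf_le_left hp.1.1, hp.2.2.1⟩, bot_le⟩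
  rw [Finset.card_eq_sum_card_fiberwise hmap]
  push_cast
  rw [GG, GG, ← Finset.sum_add_distrib, Finset.sum_div, Finset.mul_sum, Finset.mul_sum]
  refine Finset.sum_le_sum fun z hz => ?_
  obtain ⟨hz1, -⟩ := mem_above.1 hz
  have e : (Cset k f g).filter (fun p => p.1 ⊓ p.2 = z) ⊆
      ((above n z) ×ˢ (above n z)).filter (fun p => ∀ v ∈ z, Fs f v p.1 = Fs g v p.2) := by
    intro p
    simp only [Cset, mem_filter, mem_univ, true_and, mem_product, mem_above]
    rintro ⟨⟨h1, h2, h3, h5⟩, h4⟩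
    refine ⟨⟨⟨h1, h4 ▸ inf_le_left⟩, ⟨h2, h4 ▸ inf_le_right⟩⟩, ?_⟩
    intro v hv
    rw [← h4] at hv
    rw [Fs_mem f hv.1, Fs_mem g hv.2, h5 v hv.1 hv.2]
  have h1 : (((Cset k f g).filter (fun p => p.1 ⊓ p.2 = z)).card : ℝ) ≤
      ∑ x ∈ above n z, ∑ y ∈ above n z,
        if (∀ v ∈ z, Fs f v x = Fs g v y) then (1:ℝ) else 0 := by
    refine (Nat.cast_le.2 (Finset.card_le_card e)).trans (le_of_eq ?_)
    rw [Finset.card_filter, Finset.sum_product]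
    push_cast; rfl
  calc _ ≤ (2:ℝ) ^ k * ∑ x ∈ above n z, ∑ y ∈ above n z,
        (if (∀ v ∈ z, Fs f v x = Fs g v y) then (1:ℝ) else 0) :=
        mul_le_mul_of_nonneg_left h1 (by positivity)
    _ = ∑ x ∈ above n z, ∑ y ∈ above n z, (2:ℝ) ^ k *
        (if (∀ v ∈ z, Fs f v x = Fs g v y) then (1:ℝ) else 0) := by
        simp only [Finset.mul_sum]
    _ ≤ ∑ x ∈ above n z, ∑ y ∈ above n z, ∑ v with v ∈ z, Fs f v x * Fs g v y := by
        refine Finset.sum_le_sum fun x hx => Finset.sum_le_sum fun y hy => ?_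
        obtain ⟨hx1, hx2⟩ := mem_above.1 hx
        obtain ⟨hy1, hy2⟩ := mem_above.1 hy
        have := char_sum hf hg hx1 hy1 hx2 hy2
        rwa [hz1.2] at this
    _ = ∑ v with v ∈ z, (∑ x ∈ above n z, Fs f v x) * (∑ y ∈ above n z, Fs g v y) := by
        simp only [Finset.sum_mul_sum]
        symm
        rw [Finset.sum_comm]
        refine Finset.sum_congr rfl fun x _ => ?_
        rw [Finset.sum_comm]
    _ ≤ _ := by
        rw [← Finset.sum_add_distrib, Finset.sum_div, Finset.mul_sum]
        refine Finset.sum_le_sum fun v _ => ?_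
        rw [sum_bavg, sum_bavg, hz1.2]
        have := sq_nonneg (Nc n k * (bavg (Fs f v) z - bavg (Fs g v) z))
        nlinarith

theorem GG_bound {n k : ℕ} (hk : 1 ≤ k) (hkn : k + 1 ≤ n)
    (f : (S : Submodule F2 (PV n)) → (S → F2)) :
    GG k f ≤ Kc n k 0 + Kc n k 1 * (EE f + 4 ^ n * (4 * 2 ^ k / 2 ^ n)) := by
  have h1 : ∀ z : Submodule F2 (PV n), ∑ v with v ∈ z, bavg (Fs f v) z ^ 2 =
      bavg (Fs f 0) z ^ 2 + ∑ v ∈ outs ⊥ z, bavg (Fs f v) z ^ 2 := by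
    intro z
    have e : univ.filter (fun v => v ∈ z) = insert 0 (outs ⊥ z) := by
      ext v
      simp only [mem_filter, mem_univ, true_and, Finset.mem_insert]
      rw [mem_outs_bot]
      constructor
      · intro h
        by_cases h0 : v = 0
        · exact Or.inl h0
        · exact Or.inr ⟨h, h0⟩
      · rintro (rfl | h)
        · exact z.zero_mem
        · exact h.1
    have hn : (0 : PV n) ∉ outs ⊥ z := by rw [mem_outs_bot]; simp
    rw [e, Finset.sum_insert hn]
  unfold GG
  simp only [h1]
  rw [Finset.sum_add_distrib, ← sum_swap ⊥ (fun z v => bavg (Fs f v) z ^ 2)]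
  have hKp : 0 < Kc n k 1 := Kc_pos (by omega)
  apply add_le_add
  · have := card_above (n := n) (k := k) (by omega) k ⊥ iso_bot (by rw [finrank_bot]; omega)
    rw [finrank_bot] at this
    rw [← this, Finset.card_eq_sum_ones]
    push_cast
    refine Finset.sum_le_sum fun z hz => (sq_le_one_iff_abs_le_one _).2 ?_
    exact bavg_abs _ (Fs_abs f 0) (mem_above.1 hz).1.1
  · calc _ ≤ ∑ w ∈ outs ⊥ (perp (⊥ : Submodule F2 (PV n))),
          Kc n k 1 * (be f w ^ 2 + 4 * 2 ^ k / 2 ^ n) := by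
          refine Finset.sum_le_sum fun w hw => ?_
          have hw0 := mem_outs_bot_perp.1 hw
          have := level_up hkn (Fs f w) (Fs_abs f w) (k - 1) (Submodule.span F2 {w})
            (iso_span w) (by rw [frs hw0]; omega)
          rw [frs hw0] at this
          rw [bot_sup_eq]
          refine this.trans (mul_le_mul_of_nonneg_left ?_ hKp.le)
          have : (4:ℝ) * (2 ^ k - 2 ^ 1) / 2 ^ n ≤ 4 * 2 ^ k / 2 ^ n := by
            apply div_le_div_of_nonneg_right _ (by positivity)
            linarith
          unfold be
          linarith
      _ = Kc n k 1 * (EE f + (outs ⊥ (perp (⊥ : Submodule F2 (PV n)))).card *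
            (4 * 2 ^ k / 2 ^ n)) := by
          rw [← Finset.mul_sum, Finset.sum_add_distrib, Finset.sum_const, nsmul_eq_mul, EE]
      _ ≤ _ := by
          apply mul_le_mul_of_nonneg_left _ hKp.le
          have := mul_le_mul_of_nonneg_right
            (card_le_PV (outs ⊥ (perp (⊥ : Submodule F2 (PV n)))))
            (show (0:ℝ) ≤ 4 * 2 ^ k / 2 ^ n by positivity)
          linarith

theorem GG_final {k : ℕ} (hk : 2 ≤ k) {f : (S : Submodule F2 (PV (2 * k))) → (S → F2)}
    (hf : ∀ S ∈ Lset (2 * k) (2 * k), IsOutcome S (f S)) {s : ℝ} (hs : 0 ≤ s)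
    (hs2 : s ^ 2 = 2 ^ k) (hs1 : 1 ≤ s) :
    GG k f ≤ Kc (2 * k) k 0 * (15 * s) := by
  have h1 := GG_bound (n := 2 * k) (k := k) (by omega) (by omega) f
  have h2 := EE_bound hk hf
  have h3 : EE f ≤ 3 * s ^ 7 := by
    apply le_of_sq_le_sq _ (by positivity)
    refine h2.trans ?_
    have : (2:ℝ) ^ (7 * k) = s ^ 14 := by
      rw [mul_comm, pow_mul, ← hs2]; ring
    rw [this]
    have : 0 ≤ s ^ 14 := by positivity
    nlinarith
  have e1 : (4:ℝ) ^ (2 * k) = s ^ 8 := by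
    rw [show (4:ℝ) = 2 ^ 2 by norm_num, ← pow_mul, show 2 * (2 * k) = k * 4 by ring, pow_mul,
      ← hs2]; ring
  have e2 : (2:ℝ) ^ (2 * k) = s ^ 4 := by
    rw [show 2 * k = k * 2 by ring, pow_mul, ← hs2]; ring
  have hsp : 0 < s := by linarith
  have e3 : (4:ℝ) ^ (2 * k) * (4 * 2 ^ k / 2 ^ (2 * k)) = 4 * s ^ 6 := by
    rw [e1, e2, ← hs2]; field_simp
  rw [e3] at h1
  have K0 : 0 < Kc (2 * k) k 0 := Kc_pos (by omega)
  have K1 : 0 < Kc (2 * k) k 1 := Kc_pos (by omega)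
  have hK := Kc_step (n := 2 * k) (k := k) (j := 0) (by omega)
  have e4 : (2:ℝ) ^ (2 * (2 * k) - 0) = s ^ 8 := by
    rw [Nat.sub_zero, show 2 * (2 * k) = k * 4 by ring, pow_mul, ← hs2]; ring
  rw [e4, ← hs2, pow_zero, zero_add] at hK
  have hs8 : 2 ≤ s ^ 8 := by
    have : (2:ℝ) ^ 1 ≤ 2 ^ k := pow_le_pow_right₀ (by norm_num) (by omega)
    rw [← hs2] at this
    have h4 : s ^ 8 = (s ^ 2) ^ 4 := by ring
    rw [h4]
    have : (2:ℝ) ^ 4 ≤ (s ^ 2) ^ 4 := pow_le_pow_left₀ (by norm_num) (by linarith) 4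
    linarith
  have hK2 : Kc (2 * k) k 1 * s ^ 6 ≤ 2 * Kc (2 * k) k 0 := by
    have a1 : Kc (2 * k) k 1 * s ^ 8 ≤ 2 * s ^ 2 * Kc (2 * k) k 0 := by nlinarith
    have a2 : (0:ℝ) < s ^ 2 := by positivity
    apply le_of_mul_le_mul_left _ a2
    linarith [a1, show s ^ 2 * (Kc (2 * k) k 1 * s ^ 6) = Kc (2 * k) k 1 * s ^ 8 by ring]
  have h5 : Kc (2 * k) k 1 * (EE f + 4 * s ^ 6) ≤ Kc (2 * k) k 1 * (7 * s ^ 7) := by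
    apply mul_le_mul_of_nonneg_left _ K1.le
    have : s ^ 6 ≤ s ^ 7 := pow_le_pow_right₀ hs1 (by norm_num)
    linarith
  have h6 : Kc (2 * k) k 1 * (7 * s ^ 7) ≤ 14 * s * Kc (2 * k) k 0 := by
    have := mul_le_mul_of_nonneg_left hK2 (show 0 ≤ 7 * s by positivity)
    nlinarith
  nlinarith

theorem large_k {k : ℕ} (hk : 20 ≤ k) {f g : (S : Submodule F2 (PV (2 * k))) → (S → F2)}
    (hf : ∀ S ∈ Lset (2 * k) (2 * k), IsOutcome S (f S))
    (hg : ∀ S ∈ Lset (2 * k) (2 * k), IsOutcome S (g S)) :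
    ((Cset k f g).card : ℝ) ≤ (95 / 100) ^ (2 * k) * ((Dset (2 * k) k).card : ℝ) := by
  set r := Real.sqrt 2 with hr
  have hr2 : r ^ 2 = 2 := Real.sq_sqrt (by norm_num)
  have hr1 : (142:ℝ) / 101 ≤ r := Real.le_sqrt_of_sq_le (by norm_num)
  set s := r ^ k with hs
  have hs1 : 1 ≤ s := one_le_pow₀ (by linarith)
  have hs2 : s ^ 2 = 2 ^ k := by rw [hs, ← pow_mul, mul_comm, pow_mul, hr2]
  have h1 := GG_final (by omega) hf (by linarith) hs2 hs1
  have h2 := GG_final (by omega) hg (by linarith) hs2 hs1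
  have h3 := card_C (k := k) hf hg
  have h4 := card_D (n := 2 * k) (k := k) (by omega)
  have h5 := Nc_le_Tc' (n := 2 * k) (i := k) (by omega)
  have K0 : 0 < Kc (2 * k) k 0 := Kc_pos (by omega)
  have N0 : 0 < Nc (2 * k) k := Kc_pos (by omega)
  set C := ((Cset k f g).card : ℝ)
  set D := ((Dset (2 * k) k).card : ℝ)
  have h6 : s ^ 2 * C ≤ 45 * s * D := by
    rw [hs2]
    calc _ ≤ Nc (2 * k) k ^ 2 * (Kc (2 * k) k 0 * (15 * s)) :=
          h3.trans (mul_le_mul_of_nonneg_left (by linarith) (by positivity))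
      _ = (Nc (2 * k) k * Kc (2 * k) k 0 * (15 * s)) * Nc (2 * k) k := by ring
      _ ≤ (Nc (2 * k) k * Kc (2 * k) k 0 * (15 * s)) * (3 * Tc (2 * k) k) :=
          mul_le_mul_of_nonneg_left h5 (by positivity)
      _ = _ := by rw [h4]; ring
  have hsp : 0 < s := by linarith
  have h7 : s * C ≤ 45 * D := by
    apply le_of_mul_le_mul_left _ hsp
    linarith [show s * (s * C) = s ^ 2 * C by ring]
  have hD : 0 ≤ D := Nat.cast_nonneg _
  have h8 : 45 ≤ (95 / 100 : ℝ) ^ (2 * k) * s := by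
    rw [pow_mul, hs, ← mul_pow]
    have : (126 / 100 : ℝ) ≤ (95 / 100) ^ 2 * r := by
      have := mul_le_mul_of_nonneg_left hr1 (show (0:ℝ) ≤ (95 / 100) ^ 2 by norm_num)
      refine le_trans ?_ this
      norm_num
    calc (45:ℝ) ≤ (126 / 100) ^ 20 := by norm_num
      _ ≤ (126 / 100) ^ k := pow_le_pow_right₀ (by norm_num) hk
      _ ≤ _ := pow_le_pow_left₀ (by norm_num) this k
  apply le_of_mul_le_mul_left _ hsp
  calc s * C ≤ 45 * D := h7
    _ ≤ ((95 / 100 : ℝ) ^ (2 * k) * s) * D := mul_le_mul_of_nonneg_right h8 hD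
    _ = _ := by ring

end LV

section LV
open Classical

theorem exists_mid {n k : ℕ} {w : Submodule F2 (PV n)} (hk : k ≤ Module.finrank F2 w) (d : ℕ) :
    ∀ u : Submodule F2 (PV n), u ≤ w → Module.finrank F2 u + d = k →
      ∃ z, u ≤ z ∧ z ≤ w ∧ Module.finrank F2 z = k := by
  induction d with
  | zero => exact fun u hu h => ⟨u, le_rfl, hu, by omega⟩
  | succ d ih =>
    intro u hu h
    have hne : u ≠ w := by
      rintro rfl
      omega
    obtain ⟨a, ha, hau⟩ := SetLike.exists_of_lt (lt_of_le_of_ne hu hne)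
    obtain ⟨z, h1, h2, h3⟩ := ih (u ⊔ Submodule.span F2 {a}) (sup_le hu (span_le'.2 ha))
      (by rw [finrank_sup_span hau]; omega)
    exact ⟨z, le_sup_left.trans h1, h2, h3⟩

theorem frs_le {n : ℕ} (v : PV n) : Module.finrank F2 (Submodule.span F2 {v}) ≤ 1 := by
  by_cases h : v = 0
  · rw [h, Submodule.span_zero_singleton, finrank_bot]; omega
  · rw [frs h]

theorem strict1 {n k : ℕ} (hk : 1 ≤ k) (hkn : k ≤ n)
    {f g : (S : Submodule F2 (PV n)) → (S → F2)}
    (hall : ∀ x ∈ Lset n n, ∀ y ∈ Lset n n, Module.finrank F2 ↥(x ⊓ y) = k →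
      ConsistentOn (f x) (g y))
    {x x' : Submodule F2 (PV n)} (hx : x ∈ Lset n n) (hx' : x' ∈ Lset n n) {v : PV n}
    (hv : v ∈ x) (hv' : v ∈ x') (hd : k ≤ Module.finrank F2 ↥(x ⊓ x')) :
    Fs f v x = Fs f v x' := by
  have hs := frs_le v
  obtain ⟨z, h1, h2, h3⟩ := exists_mid hd (k - Module.finrank F2 (Submodule.span F2 {v}))
    (Submodule.span F2 {v}) (span_le'.2 ⟨hv, hv'⟩) (by omega)
  have hzx := h2.trans inf_le_left
  have hzx' := h2.trans inf_le_right
  obtain ⟨y, hy, e1, e2⟩ := exists_trans (z := z) hx hx' (n - k) z (iso_mono hzx hx.1)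
    (inf_eq_left.2 hzx) (inf_eq_left.2 hzx') (by omega)
  have hvz : v ∈ z := span_le'.1 h1
  have hvy : v ∈ y := by rw [← e1] at hvz; exact hvz.1
  have c1 := hall x hx y hy (by rw [inf_comm, e1, h3]) v hv hvy
  have c2 := hall x' hx' y hy (by rw [inf_comm, e2, h3]) v hv' hvy
  rw [Fs_mem f hv, Fs_mem f hv', c1, c2]

theorem strict2 {n k : ℕ} (hk : 1 ≤ k) (hkn : k + 1 ≤ n)
    {f g : (S : Submodule F2 (PV n)) → (S → F2)}
    (hall : ∀ x ∈ Lset n n, ∀ y ∈ Lset n n, Module.finrank F2 ↥(x ⊓ y) = k →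
      ConsistentOn (f x) (g y)) {v : PV n}
    {x' : Submodule F2 (PV n)} (hx' : x' ∈ Lset n n) (hv' : v ∈ x') (d : ℕ) :
    ∀ x : Submodule F2 (PV n), x ∈ Lset n n → v ∈ x →
      n ≤ Module.finrank F2 ↥(x ⊓ x') + d → Fs f v x = Fs f v x' := by
  induction d with
  | zero => exact fun x hx hv h => strict1 hk (by omega) hall hx hx' hv hv' (by omega)
  | succ d ih =>
    intro x hx hv h
    by_cases hle : x' ≤ x
    · rw [Submodule.eq_of_le_of_finrank_eq hle (by rw [hx.2, hx'.2])]
    · obtain ⟨w, hw', hw⟩ := SetLike.not_le_iff_exists.1 hle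
      have hw0 : w ≠ 0 := fun hc => hw (hc ▸ x.zero_mem)
      set P := perp (Submodule.span F2 {w}) with hP
      have hPr := finrank_perp (Submodule.span F2 {w})
      rw [frs hw0, ← hP] at hPr
      have hsi := Submodule.finrank_sup_add_finrank_inf_eq x P
      have hsl := Submodule.finrank_le (x ⊔ P)
      rw [finrank_PV] at hsl
      have hx2 := hx.2
      have hwn : w ∉ x ⊓ P := fun hc => hw hc.1
      have hiso : IsIsotropic ((x ⊓ P) ⊔ Submodule.span F2 {w}) := by
        apply iso_sup_span (iso_mono inf_le_left hx.1)
        rw [mem_perp]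
        intro y hy
        rw [symp_comm]
        exact mem_perp_span.1 hy.2
      have hfr := finrank_sup_span hwn
      have hub := finrank_le_of_iso hiso
      set xw := (x ⊓ P) ⊔ Submodule.span F2 {w} with hxw
      have hxwL : xw ∈ Lset n n := ⟨hiso, by omega⟩
      have hvP : v ∈ x ⊓ P := ⟨hv, mem_perp_span.2 (hx'.1 w hw' v hv')⟩
      have hvw : v ∈ xw := (le_sup_left : x ⊓ P ≤ xw) hvP
      have h1 : x ⊓ P ≤ x ⊓ xw := le_inf inf_le_left le_sup_left
      have h2 := Submodule.finrank_mono h1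
      have h3 : Fs f v x = Fs f v xw :=
        strict1 hk (by omega) hall hx hxwL hv hvw (by omega)
      have h4 : (x ⊓ x') ⊔ Submodule.span F2 {w} ≤ xw ⊓ x' := by
        refine sup_le (le_inf (le_trans ?_ le_sup_left) inf_le_right)
          (le_inf le_sup_right (span_le'.2 hw'))
        intro y hy
        exact ⟨hy.1, mem_perp_span.2 (hx'.1 w hw' y hy.2)⟩
      have h5 := Submodule.finrank_mono h4
      have hwn2 : w ∉ x ⊓ x' := fun hc => hw hc.1
      rw [finrank_sup_span hwn2] at h5
      rw [h3]
      exact ih xw hxwL hvw (by omega)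

theorem exists_lagr {n : ℕ} {u : Submodule F2 (PV n)} (hu : IsIsotropic u) :
    ∃ x ∈ Lset n n, u ≤ x := by
  have h := card_aboveN hu
  have hp : 0 < Nc n (Module.finrank F2 u) := Kc_pos (le_refl n)
  rw [← h] at hp
  have : 0 < (above n u).card := by exact_mod_cast hp
  obtain ⟨x, hx⟩ := Finset.card_pos.1 this
  exact ⟨x, mem_above.1 hx⟩

theorem strict3 {n k : ℕ} (hk : 1 ≤ k) (hkn : k + 1 ≤ n)
    {f g : (S : Submodule F2 (PV n)) → (S → F2)}
    (hf : ∀ S ∈ Lset n n, IsOutcome S (f S))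
    (hall : ∀ x ∈ Lset n n, ∀ y ∈ Lset n n, Module.finrank F2 ↥(x ⊓ y) = k →
      ConsistentOn (f x) (g y)) : False := by
  choose X hX hvX using fun v : PV n => exists_lagr (iso_span v)
  have hvX2 : ∀ v, v ∈ X v := fun v => span_le'.1 (hvX v)
  set s : PV n → ℝ := fun v => Fs f v (X v) with hs
  have key : ∀ v, ∀ x ∈ Lset n n, v ∈ x → Fs f v x = s v := fun v x hx hv =>
    strict2 hk hkn hall (hX v) (hvX2 v) n x hx hv (by omega)
  have hb : ∀ v, |s v| ≤ 1 := fun v => Fs_abs f v _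
  have ht := tri_bound s hb
  have hterm : ∀ a b : PV n, s a * s b * s (a + b) * (phase a b).re =
      (1 + sg (symp a b)) / 2 := by
    intro a b
    by_cases h : symp a b = 0
    · have hi : IsIsotropic (Submodule.span F2 {a} ⊔ Submodule.span F2 {b}) :=
        iso_sup_span (iso_span a) (mem_perp_span.2 h)
      obtain ⟨x, hx, hle⟩ := exists_lagr hi
      have ha : a ∈ x := span_le'.1 (le_sup_left.trans hle)
      have hb : b ∈ x := span_le'.1 (le_sup_right.trans hle)
      have hab := x.add_mem ha hb
      rw [← key a x hx ha, ← key b x hx hb, ← key (a + b) x hx hab, Fs_mul hf hx ha hb, h,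
        sg_zero]
      have e1 := Fs_sq f hab
      have e2 : (phase a b).re * (phase a b).re = 1 := by
        rw [phase_re_comm h, sg_mul_self]
      linear_combination ((phase a b).re * (phase a b).re) * e1 + e2
    · rw [phase_re_ncomm h, sg_ne h]; ring
  simp only [hterm] at ht
  have hsum : ∑ a : PV n, ∑ b : PV n, (1 + sg (symp a b)) / 2 = ((4:ℝ) ^ n * 4 ^ n + 4 ^ n) / 2 := by
    have : ∀ a : PV n, ∑ b : PV n, (1 + sg (symp a b)) / 2 =
        ((4:ℝ) ^ n + if a = 0 then (4:ℝ) ^ n else 0) / 2 := by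
      intro a
      rw [← Finset.sum_div, Finset.sum_add_distrib, sum_chi, Finset.sum_const, nsmul_eq_mul,
        Finset.card_univ, card_PV, mul_one]
    simp only [this]
    rw [← Finset.sum_div, Finset.sum_add_distrib, Finset.sum_const, nsmul_eq_mul,
        Finset.card_univ, card_PV]
    simp
  rw [hsum] at ht
  have e4 : (4:ℝ) ^ n = (2 ^ n) ^ 2 := by
    rw [← pow_mul, mul_comm, pow_mul]; norm_num
  have e7 : (2:ℝ) ^ (7 * n) = (2 ^ n) ^ 7 := by rw [← pow_mul, mul_comm]
  have h4 : (4:ℝ) ≤ 2 ^ n := by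
    calc (4:ℝ) = 2 ^ 2 := by norm_num
      _ ≤ _ := pow_le_pow_right₀ (by norm_num) (by omega)
  rw [e4, e7] at ht
  set t : ℝ := 2 ^ n
  have p1 : 0 < t ^ 6 := by positivity
  have p2 : 0 < t ^ 4 := by positivity
  have p3 : 4 * t ^ 7 ≤ t ^ 8 := by
    have : 0 ≤ t ^ 7 := by positivity
    nlinarith
  nlinarith

theorem strict_card {n k : ℕ} (hk : 1 ≤ k) (hkn : k + 1 ≤ n)
    {f g : (S : Submodule F2 (PV n)) → (S → F2)}
    (hf : ∀ S ∈ Lset n n, IsOutcome S (f S)) :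
    (Cset k f g).card + 1 ≤ (Dset n k).card := by
  apply Finset.card_lt_card
  refine ⟨?_, ?_⟩
  · intro p
    simp only [Cset, Dset, mem_filter, mem_univ, true_and]
    tauto
  · intro hc
    apply strict3 (k := k) (g := g) hk hkn hf
    intro x hx y hy hxy
    have : (x, y) ∈ Cset k f g := hc (by simp [Dset, hx, hy, hxy])
    simp only [Cset, mem_filter, mem_univ, true_and] at this
    exact this.2.2.2

def Good (ε : ℝ) (k : ℕ) : Prop :=
  ∀ f g : (S : Submodule F2 (PV (2 * k))) → (S → F2),
    (∀ S ∈ Lset (2 * k) (2 * k), IsOutcome S (f S)) →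
    (∀ S ∈ Lset (2 * k) (2 * k), IsOutcome S (g S)) →
    ((Cset k f g).card : ℝ) ≤ ε ^ (2 * k) * ((Dset (2 * k) k).card : ℝ)

theorem Good_mono {ε δ : ℝ} (h0 : 0 ≤ ε) (h : ε ≤ δ) {k : ℕ} (hg : Good ε k) : Good δ k :=
  fun f g hf hg' => (hg f g hf hg').trans
    (mul_le_mul_of_nonneg_right (pow_le_pow_left₀ h0 h _) (Nat.cast_nonneg _))

theorem Good_one {k : ℕ} (hk : 1 ≤ k) : ∃ ε : ℝ, ε ∈ Set.Ioo (0:ℝ) 1 ∧ Good ε k := by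
  have hD : 0 < ((Dset (2 * k) k).card : ℝ) := by
    rw [card_D (by omega)]
    have K0 : 0 < Kc (2 * k) k 0 := Kc_pos (by omega)
    have N0 : 0 < Nc (2 * k) k := Kc_pos (by omega)
    have := Tc_pos (2 * k) k
    positivity
  have hD1 : 1 ≤ ((Dset (2 * k) k).card : ℝ) := by
    have : 0 < (Dset (2 * k) k).card := by exact_mod_cast hD
    exact_mod_cast this
  have hk1 : (1:ℝ) ≤ k := by exact_mod_cast hk
  set D := ((Dset (2 * k) k).card : ℝ) with hDd
  set a : ℝ := 1 / (2 * k * D) with ha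
  have hden : 2 ≤ 2 * k * D := by nlinarith
  have ha0 : 0 < a := by positivity
  have ha1 : a ≤ 1 / 2 := one_div_le_one_div_of_le (by norm_num) hden
  refine ⟨1 - a, ⟨by linarith, by linarith⟩, ?_⟩
  intro f g hf hg
  have h1 := strict_card (k := k) (g := g) hk (by omega) hf
  have h2 : ((Cset k f g).card : ℝ) + 1 ≤ D := by rw [hDd]; exact_mod_cast h1
  have h3 := one_add_mul_le_pow (a := -a) (by linarith) (2 * k)
  push_cast at h3
  have e : 1 + -a = 1 - a := by ring
  rw [e] at h3
  have h4 : 2 * k * a * D = 1 := by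
    rw [ha]; field_simp
  have h5 := mul_le_mul_of_nonneg_right h3 hD.le
  nlinarith

theorem Good_small (m : ℕ) : ∃ ε : ℝ, ε ∈ Set.Ioo (0:ℝ) 1 ∧ ∀ k, 1 ≤ k → k < m → Good ε k := by
  induction m with
  | zero => exact ⟨1 / 2, ⟨by norm_num, by norm_num⟩, fun k _ h => absurd h (by omega)⟩
  | succ m ih =>
    obtain ⟨ε, hε, h⟩ := ih
    by_cases hm : 1 ≤ m
    · obtain ⟨δ, hδ, h'⟩ := Good_one hm
      refine ⟨max ε δ, ⟨lt_max_of_lt_left hε.1, max_lt hε.2 hδ.2⟩, ?_⟩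
      intro k hk hkm
      by_cases hkm2 : k = m
      · subst hkm2
        exact Good_mono hδ.1.le (le_max_right _ _) h'
      · exact Good_mono hε.1.le (le_max_left _ _) (h k hk (by omega))
    · exact ⟨ε, hε, fun k hk hkm => absurd hkm (by omega)⟩

theorem Good_all : ∃ ε : ℝ, ε ∈ Set.Ioo (0:ℝ) 1 ∧ ∀ k, 1 ≤ k → Good ε k := by
  obtain ⟨ε, hε, h⟩ := Good_small 20
  refine ⟨max ε (95 / 100), ⟨lt_max_of_lt_left hε.1, max_lt hε.2 (by norm_num)⟩, ?_⟩
  intro k hk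
  by_cases hk2 : k < 20
  · exact Good_mono hε.1.le (le_max_left _ _) (h k hk hk2)
  · exact Good_mono (by norm_num) (le_max_right _ _)
      (fun f g hf hg => large_k (by omega) hf hg)

theorem final_aux :
    ∃ ε : ℝ, ε ∈ Set.Ioo (0 : ℝ) 1 ∧ ∀ n : ℕ, Even n → 2 ≤ n →
      ∀ f g : (S : Submodule F2 (PV n)) → (S → F2),
        (∀ S ∈ Lset n n, IsOutcome S (f S)) →
        (∀ S ∈ Lset n n, IsOutcome S (g S)) →
        (Nat.card {p : Submodule F2 (PV n) × Submodule F2 (PV n) |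
            p.1 ∈ Lset n n ∧ p.2 ∈ Lset n n ∧
            Module.finrank F2 ↥(p.1 ⊓ p.2) = n / 2 ∧
            ConsistentOn (f p.1) (g p.2)} : ℝ) ≤
          ε ^ n *
            (Nat.card {p : Submodule F2 (PV n) × Submodule F2 (PV n) |
              p.1 ∈ Lset n n ∧ p.2 ∈ Lset n n ∧
              Module.finrank F2 ↥(p.1 ⊓ p.2) = n / 2} : ℝ) := by
  obtain ⟨ε, hε, h⟩ := Good_all
  refine ⟨ε, hε, ?_⟩
  intro n hn hn2 f g hf hg
  obtain ⟨k, hk⟩ := hn.two_dvd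
  subst hk
  have e : 2 * k / 2 = k := by omega
  have h1 := h k (by omega) f g hf hg
  rw [e]
  have e1 := Nat.subtype_card (p := fun p : Submodule F2 (PV (2 * k)) × Submodule F2 (PV (2 * k)) =>
    p.1 ∈ Lset (2 * k) (2 * k) ∧ p.2 ∈ Lset (2 * k) (2 * k) ∧
    Module.finrank F2 ↥(p.1 ⊓ p.2) = k ∧ ConsistentOn (f p.1) (g p.2)) (Cset k f g)
    (by intro p; simp [Cset])
  have e2 := Nat.subtype_card (p := fun p : Submodule F2 (PV (2 * k)) × Submodule F2 (PV (2 * k)) =>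
    p.1 ∈ Lset (2 * k) (2 * k) ∧ p.2 ∈ Lset (2 * k) (2 * k) ∧
    Module.finrank F2 ↥(p.1 ⊓ p.2) = k) (Dset (2 * k) k)
    (by intro p; simp [Dset])
  rw [← e1, ← e2] at h1
  exact h1

end LV

/-- There is `ε ∈ (0,1)` such that for every even `n ≥ 2` and every pair of outcome families
`f, g` on the maximal isotropic subspaces of `F2^{2n}`, the fraction of ordered pairs `(x,y)`
with `dim(x ∩ y) = n/2` for which `f_x` and `g_y` are consistent is at most `ε^n`
(i.e. `Val_loc(Z_{n/2}) < ε^n`). -/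
theorem local_value_half_game :
    ∃ ε : ℝ, ε ∈ Set.Ioo (0 : ℝ) 1 ∧ ∀ n : ℕ, Even n → 2 ≤ n →
      ∀ f g : (S : Submodule F2 (PV n)) → (S → F2),
        (∀ S ∈ Lset n n, IsOutcome S (f S)) →
        (∀ S ∈ Lset n n, IsOutcome S (g S)) →
        (Nat.card {p : Submodule F2 (PV n) × Submodule F2 (PV n) |
            p.1 ∈ Lset n n ∧ p.2 ∈ Lset n n ∧
            Module.finrank F2 ↥(p.1 ⊓ p.2) = n / 2 ∧
            ConsistentOn (f p.1) (g p.2)} : ℝ) ≤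
          ε ^ n *
            (Nat.card {p : Submodule F2 (PV n) × Submodule F2 (PV n) |
              p.1 ∈ Lset n n ∧ p.2 ∈ Lset n n ∧
              Module.finrank F2 ↥(p.1 ⊓ p.2) = n / 2} : ℝ) := by
  exact final_aux
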